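/- Let u(y,t) = ∫_{ℝⁿ} K(y,z,t) u₀(z) dz, where K is the Euclidean heat kernel on ℝⁿ and u₀ : ℝⁿ → ℝ is continuous, compactly supported, nonnegative, and not identically zero. Fix x₀ ∈ ℝⁿ and t₀ > 0, write τ = t₀ - t, and let Ĥ(y,t) = (4πτ)^{-n/2} exp(-‖x₀-y‖²/(4τ)) for 0 < t < t₀. Then u(x₀,t₀) Δ log u(x₀,t₀) + (n/(2t₀)) u(x₀,t₀) ≥ (2/t₀²) ∫₀^{t₀} t² ( ∫_{ℝⁿ} ‖ ∇² log u(y,t) + (1/(2t)) I ‖²_F u(y,t) Ĥ(y,t) dy ) dt, and in particular the left-hand side is nonnegative. -/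

import Mathlib

open Real MeasureTheory Filter Set

/-- The Euclidean heat kernel on ℝⁿ. -/
noncomputable def heatK (n : ℕ) (x y : EuclideanSpace ℝ (Fin n)) (t : ℝ) : ℝ :=
  (4 * π * t) ^ (-(n : ℝ) / 2) * Real.exp (-‖x - y‖ ^ 2 / (4 * t))

/-- `i`-th partial derivative of `f : ℝⁿ → ℝ`. -/
noncomputable def pdv {n : ℕ} (i : Fin n) (f : EuclideanSpace ℝ (Fin n) → ℝ)
    (y : EuclideanSpace ℝ (Fin n)) : ℝ :=
  fderiv ℝ f y (EuclideanSpace.single i 1)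

/-- `(i,j)` entry of the Hessian of `f : ℝⁿ → ℝ`. -/
noncomputable def hess {n : ℕ} (i j : Fin n) (f : EuclideanSpace ℝ (Fin n) → ℝ)
    (y : EuclideanSpace ℝ (Fin n)) : ℝ :=
  pdv i (pdv j f) y

/-- Euclidean Laplacian (trace of the Hessian) of `f : ℝⁿ → ℝ`. -/
noncomputable def lap {n : ℕ} (f : EuclideanSpace ℝ (Fin n) → ℝ)
    (y : EuclideanSpace ℝ (Fin n)) : ℝ :=
  ∑ i, hess i i f y

open scoped InnerProductSpace NNReal ProbabilityTheory Topology

/-!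
Let `μ` be the initial measure and `Z θ b = ∫ exp (⟪b, z⟫ - θ ‖z‖ ^ 2) ∂μ`. Expanding the square in
the heat kernel gives `u y t = heatK n y 0 t * Z θ b` with `θ = 1 / (4 t)` and `b = y / (2 t)`, so
`∇² log u + I / (2 t)` is `(2 t)⁻²` times the covariance matrix of the probability measure `P θ b`
with density `exp (⟪b, z⟫ - θ ‖z‖ ^ 2) / Z θ b`. In the variables `(θ, b)` the backward heat kernel
times `heatK n y 0 t` becomes, up to constants, the heat kernel centred at `x = x₀ / (2 t₀)` and
running for the time `θ - θ₀`, where `θ₀ = 1 / (4 t₀)`.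

Fix a coordinate `z i` with mean `m = m θ b` under `P θ b`. Since `Z` and all its weighted variants
solve the heat equation backwards in `θ`, the heat average of `Z m ^ 2` at `x` over the time
`θ - θ₀` increases in `θ` at the rate twice the average of `Z ∑ j, cov (z j, z i) ^ 2`. It is never
smaller than `Z m ^ 2` at `(θ₀, x)`, by Jensen's inequality, and never larger than the second moment
`∫ z i ^ 2 exp (⟪x, z⟫ - θ₀ ‖z‖ ^ 2) ∂μ`, because `m ^ 2` is at most the `P θ b`-mean of `z i ^ 2`.
Integrating the rate over `θ > θ₀`, that is over `0 < t < t₀`, bounds it by the gap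
`Z θ₀ x * Var (z i)`, and the sum of these gaps over `i` is, up to the same constants, the Laplacian
side of the inequality.
-/

section ExponentialFamily

variable {Ω P : Type*} [MeasurableSpace Ω] {μ : Measure Ω} [NormedAddCommGroup P] [NormedSpace ℝ P]
  {φ : Ω → ℝ} {T : Ω → P →L[ℝ] ℝ} {M : ℝ}

theorem norm_exp_clm_le {L : P →L[ℝ] ℝ} (hL : ‖L‖ ≤ M) {p : P} {r : ℝ} (hp : ‖p‖ ≤ r) :
    ‖exp (L p)‖ ≤ exp (M * r) := by
  rw [norm_of_nonneg (exp_pos _).le]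
  exact exp_le_exp.2 ((le_abs_self _).trans (L.le_of_opNorm_le_of_le hL hp))

theorem integrable_mul_exp (hφ : Integrable φ μ) (hT : AEStronglyMeasurable T μ)
    (hM : ∀ᵐ ω ∂μ, ‖T ω‖ ≤ M) (p : P) : Integrable (fun ω => φ ω * exp (T ω p)) μ :=
  hφ.mul_bdd (Real.continuous_exp.comp_aestronglyMeasurable (hT.apply_continuousLinearMap p))
    (hM.mono fun _ h => norm_exp_clm_le h le_rfl)

theorem hasFDerivAt_integral_mul_exp (hφ : Integrable φ μ) (hT : AEStronglyMeasurable T μ)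
    (hM : ∀ᵐ ω ∂μ, ‖T ω‖ ≤ M) (p : P) :
    HasFDerivAt (fun p => ∫ ω, φ ω * exp (T ω p) ∂μ)
      (∫ ω, (φ ω * exp (T ω p)) • T ω ∂μ) p := by
  refine hasFDerivAt_integral_of_dominated_of_fderiv_le (s := Metric.ball p 1)
    (bound := fun ω => ‖φ ω‖ * exp (M * (‖p‖ + 1)) * M)
    (F' := fun q ω => (φ ω * exp (T ω q)) • T ω) (Metric.ball_mem_nhds p one_pos)
    (.of_forall fun q => (integrable_mul_exp hφ hT hM q).1) (integrable_mul_exp hφ hT hM p)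
    ((integrable_mul_exp hφ hT hM p).1.smul hT) ?_ ((hφ.norm.mul_const _).mul_const _)
    (.of_forall fun ω q _ => ?_)
  · filter_upwards [hM] with ω hω q hq
    have hqp : ‖q‖ ≤ ‖p‖ + 1 := by
      have := norm_le_norm_add_norm_sub' q p
      rw [mem_ball_iff_norm] at hq
      linarith
    rw [norm_smul, norm_mul]
    gcongr
    exact norm_exp_clm_le hω hqp
  · simpa only [smul_smul] using ((T ω).hasFDerivAt.exp).const_mul (φ ω)

end ExponentialFamily

section GaussTilt

variable {E : Type*} [NormedAddCommGroup E] [InnerProductSpace ℝ E] [MeasurableSpace E]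

/-- The Laplace transform of `φ μ` with an additional Gaussian weight, as a function of the
Gaussian parameter `θ` and the dual variable `b`. It solves the heat equation backwards in `θ`. -/
noncomputable def gaussLaplace (μ : Measure E) (φ : E → ℝ) (θ : ℝ) (b : E) : ℝ :=
  ∫ z, φ z * exp (⟪b, z⟫_ℝ - θ * ‖z‖ ^ 2) ∂μ

/-- The probability measure with density proportional to `exp (⟪b, z⟫ - θ ‖z‖ ^ 2)` with respect
to `μ`; its mean values are the quotients `gaussLaplace μ φ / gaussLaplace μ 1`. -/
noncomputable def gaussTilt (μ : Measure E) (θ : ℝ) (b : E) : Measure E :=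
  μ.tilted fun z => ⟪b, z⟫_ℝ - θ * ‖z‖ ^ 2

variable {μ : Measure E} {φ ψ : E → ℝ} {M R θ : ℝ} {b : E}

theorem integral_gaussTilt :
    ∫ z, φ z ∂gaussTilt μ θ b = gaussLaplace μ φ θ b / gaussLaplace μ 1 θ b := by
  simp_rw [gaussTilt, integral_tilted, gaussLaplace, smul_eq_mul, ← integral_div, Pi.one_apply,
    one_mul]
  congr with z
  ring

theorem ae_gaussTilt {p : E → Prop} (h : ∀ᵐ z ∂μ, p z) : ∀ᵐ z ∂gaussTilt μ θ b, p z :=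
  (tilted_absolutelyContinuous μ _).ae_le h

theorem abs_integral_gaussTilt_le [IsProbabilityMeasure (gaussTilt μ θ b)]
    (hM : ∀ᵐ z ∂μ, |φ z| ≤ M) : |∫ z, φ z ∂gaussTilt μ θ b| ≤ M := by
  simpa using norm_integral_le_of_norm_le_const (f := φ) (ae_gaussTilt (θ := θ) (b := b) hM)

theorem abs_gaussLaplace_le [IsFiniteMeasure μ] (hμ : ∀ᵐ z ∂μ, ‖z‖ ≤ R)
    (hM : ∀ᵐ z ∂μ, |φ z| ≤ M) (hθ : 0 ≤ θ) (b : E) :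
    |gaussLaplace μ φ θ b| ≤ M * μ.real univ * exp (R * ‖b‖) := by
  have pointwise : ∀ᵐ z ∂μ, ‖φ z * exp (⟪b, z⟫_ℝ - θ * ‖z‖ ^ 2)‖ ≤ M * exp (R * ‖b‖) := by
    filter_upwards [hμ, hM] with z hz hφz
    have hM0 : 0 ≤ M := (abs_nonneg _).trans hφz
    rw [norm_mul, norm_of_nonneg (exp_pos _).le, norm_eq_abs]
    gcongr
    calc ⟪b, z⟫_ℝ - θ * ‖z‖ ^ 2 ≤ ‖b‖ * ‖z‖ :=
          (sub_le_self _ (by positivity)).trans (real_inner_le_norm b z)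
      _ ≤ R * ‖b‖ := by rw [mul_comm]; gcongr
  calc _ ≤ M * exp (R * ‖b‖) * μ.real univ := norm_integral_le_of_norm_le_const pointwise
    _ = _ := by ring

variable [FiniteDimensional ℝ E]

theorem exists_ae_abs_le_of_continuous (hμ : ∀ᵐ z ∂μ, ‖z‖ ≤ R) (hφ : Continuous φ) :
    ∃ M, ∀ᵐ z ∂μ, |φ z| ≤ M :=
  have ⟨M, hM⟩ := (isCompact_closedBall (0 : E) R).exists_bound_of_continuousOn hφ.continuousOn
  ⟨M, hμ.mono fun z hz => hM z (mem_closedBall_zero_iff.2 hz)⟩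

variable [BorelSpace E]

theorem memLp_gaussTilt [IsFiniteMeasure (gaussTilt μ θ b)] (hμ : ∀ᵐ z ∂μ, ‖z‖ ≤ R)
    (hφ : Continuous φ) : MemLp φ 2 (gaussTilt μ θ b) :=
  have ⟨M, hM⟩ := exists_ae_abs_le_of_continuous (ae_gaussTilt hμ) hφ
  .of_bound hφ.aestronglyMeasurable M hM

variable [IsFiniteMeasure μ]

theorem integrable_of_continuous_of_ae_norm_le (hμ : ∀ᵐ z ∂μ, ‖z‖ ≤ R) (hφ : Continuous φ) :
    Integrable φ μ :=
  have ⟨M, hM⟩ := exists_ae_abs_le_of_continuous hμ hφ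
  .of_bound hφ.aestronglyMeasurable M hM

theorem integrable_mul_exp_gaussian (hμ : ∀ᵐ z ∂μ, ‖z‖ ≤ R) (hφ : Continuous φ) (θ : ℝ) (b : E) :
    Integrable (fun z => φ z * exp (⟪b, z⟫_ℝ - θ * ‖z‖ ^ 2)) μ :=
  integrable_of_continuous_of_ae_norm_le hμ (by fun_prop)

theorem hasFDerivAt_gaussLaplace (hμ : ∀ᵐ z ∂μ, ‖z‖ ≤ R) (hφ : Continuous φ) (θ : ℝ) (b : E) :
    HasFDerivAt (gaussLaplace μ φ θ)
      (∫ z, (φ z * exp (⟪b, z⟫_ℝ - θ * ‖z‖ ^ 2)) • innerSL ℝ z ∂μ) b := by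
  have exp_eq (b z : E) : exp (⟪b, z⟫_ℝ - θ * ‖z‖ ^ 2)
      = exp (-(θ * ‖z‖ ^ 2)) * exp (innerSL ℝ z b) := by
    rw [innerSL_apply_apply, real_inner_comm, ← exp_add, add_comm, sub_eq_add_neg]
  convert! hasFDerivAt_integral_mul_exp (M := R) (T := fun z => innerSL ℝ z)
    (φ := fun z => φ z * exp (-(θ * ‖z‖ ^ 2)))
    (integrable_of_continuous_of_ae_norm_le hμ (by fun_prop))
    (innerSL ℝ).continuous.aestronglyMeasurable (by simpa only [innerSL_apply_norm] using hμ) b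
    using 1
  · ext b
    simp only [gaussLaplace, exp_eq, mul_assoc]
  · simp only [exp_eq, mul_assoc]

theorem hasLineDerivAt_gaussLaplace (hμ : ∀ᵐ z ∂μ, ‖z‖ ≤ R) (hφ : Continuous φ) (θ : ℝ)
    (b v : E) :
    HasLineDerivAt ℝ (gaussLaplace μ φ θ) (gaussLaplace μ (fun z => ⟪v, z⟫_ℝ * φ z) θ b) b v := by
  convert! (hasFDerivAt_gaussLaplace hμ hφ θ b).hasLineDerivAt v using 1
  refine .trans ?_ (ContinuousLinearMap.integral_apply
    ((integrable_mul_exp_gaussian hμ hφ θ b).smul_bdd R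
      (innerSL ℝ).continuous.aestronglyMeasurable (by simpa only [innerSL_apply_norm] using hμ))
    v).symm
  refine integral_congr_ae (.of_forall fun z => ?_)
  simp only [Pi.smul_apply', smul_apply, innerSL_apply_apply, real_inner_comm v, smul_eq_mul]
  ring

theorem hasDerivAt_gaussLaplace (hμ : ∀ᵐ z ∂μ, ‖z‖ ≤ R) (hφ : Continuous φ) (θ : ℝ) (b : E) :
    HasDerivAt (fun θ => gaussLaplace μ φ θ b)
      (-gaussLaplace μ (fun z => ‖z‖ ^ 2 * φ z) θ b) θ := by
  let T (z : E) : ℝ →L[ℝ] ℝ := -‖z‖ ^ 2 • .id ℝ ℝ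
  have T_meas : AEStronglyMeasurable T μ := Continuous.aestronglyMeasurable (by fun_prop)
  have T_bound : ∀ᵐ z ∂μ, ‖T z‖ ≤ R ^ 2 := by
    filter_upwards [hμ] with z hz
    simp only [T, norm_smul, norm_neg, norm_pow, norm_norm, ContinuousLinearMap.norm_id, mul_one]
    gcongr
  have exp_eq (θ : ℝ) (z : E) : exp (⟪b, z⟫_ℝ - θ * ‖z‖ ^ 2) = exp ⟪b, z⟫_ℝ * exp (T z θ) := by
    rw [← exp_add]
    simp only [T, smul_apply, ContinuousLinearMap.id_apply, smul_eq_mul]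
    ring_nf
  convert! (hasFDerivAt_integral_mul_exp (φ := fun z => φ z * exp ⟪b, z⟫_ℝ)
    (integrable_of_continuous_of_ae_norm_le hμ (by fun_prop)) T_meas T_bound θ).hasDerivAt using 1
  · simp only [gaussLaplace, exp_eq, mul_assoc]
  · simp only [mul_assoc, ← exp_eq]
    refine .trans ?_ (ContinuousLinearMap.integral_apply
      ((integrable_mul_exp_gaussian hμ hφ θ b).smul_bdd _ T_meas T_bound) 1).symm
    rw [gaussLaplace, ← integral_neg]
    refine integral_congr_ae (.of_forall fun z => ?_)
    simp only [T, Pi.smul_apply', smul_apply, ContinuousLinearMap.id_apply, smul_eq_mul]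
    ring

theorem continuous_gaussLaplace (hμ : ∀ᵐ z ∂μ, ‖z‖ ≤ R) (hφ : Continuous φ) (θ : ℝ) :
    Continuous (gaussLaplace μ φ θ) :=
  continuous_iff_continuousAt.2 fun b => (hasFDerivAt_gaussLaplace hμ hφ θ b).continuousAt

section Mean

variable [NeZero μ]

theorem gaussLaplace_one_pos (hμ : ∀ᵐ z ∂μ, ‖z‖ ≤ R) (θ : ℝ) (b : E) :
    0 < gaussLaplace μ 1 θ b := by
  simpa only [gaussLaplace, Pi.one_apply, one_mul] using
    integral_exp_pos (by simpa using integrable_mul_exp_gaussian hμ continuous_one θ b)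

theorem isProbabilityMeasure_gaussTilt (hμ : ∀ᵐ z ∂μ, ‖z‖ ≤ R) (θ : ℝ) (b : E) :
    IsProbabilityMeasure (gaussTilt μ θ b) :=
  isProbabilityMeasure_tilted (by simpa using integrable_mul_exp_gaussian hμ continuous_one θ b)

theorem covariance_gaussTilt (hμ : ∀ᵐ z ∂μ, ‖z‖ ≤ R) (hφ : Continuous φ) (hψ : Continuous ψ)
    (θ : ℝ) (b : E) :
    cov[φ, ψ; gaussTilt μ θ b] = ∫ z, φ z * ψ z ∂gaussTilt μ θ b
      - (∫ z, φ z ∂gaussTilt μ θ b) * ∫ z, ψ z ∂gaussTilt μ θ b :=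
  have := isProbabilityMeasure_gaussTilt hμ θ b
  ProbabilityTheory.covariance_eq_sub (memLp_gaussTilt hμ hφ) (memLp_gaussTilt hμ hψ)

end Mean

end GaussTilt

section WeightedSqMean

variable {E : Type*} [NormedAddCommGroup E] [InnerProductSpace ℝ E] [FiniteDimensional ℝ E]
  [MeasurableSpace E] [BorelSpace E] {μ : Measure E} [IsFiniteMeasure μ]
  {φ : E → ℝ} {R : ℝ}

/-- The squared mean of `φ` under `gaussTilt μ θ b`, weighted by the total mass
`gaussLaplace μ 1 θ b`: the quantity whose heat evolution is monotone. -/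
noncomputable def weightedSqMean (μ : Measure E) (φ : E → ℝ) (θ : ℝ) (b : E) : ℝ :=
  gaussLaplace μ φ θ b ^ 2 / gaussLaplace μ 1 θ b

/-- The derivative of `weightedSqMean μ φ` along a vector field under which the derivative of
each `gaussLaplace μ ψ` is `gaussLaplace μ (ω * ψ)`. -/
noncomputable def weightedSqMeanDeriv (μ : Measure E) (φ ω : E → ℝ) (θ : ℝ) (b : E) : ℝ :=
  2 * (∫ z, φ z ∂gaussTilt μ θ b) * gaussLaplace μ (fun z => ω z * φ z) θ b
    - (∫ z, φ z ∂gaussTilt μ θ b) ^ 2 * gaussLaplace μ ω θ b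

theorem sum_weightedSqMeanDeriv {ι : Type*} (s : Finset ι)
    {ω : ι → E → ℝ} (hμ : ∀ᵐ z ∂μ, ‖z‖ ≤ R) (hφ : Continuous φ)
    (hω : ∀ i ∈ s, Continuous (ω i)) (θ : ℝ) (b : E) :
    ∑ i ∈ s, weightedSqMeanDeriv μ φ (ω i) θ b
      = weightedSqMeanDeriv μ φ (fun z => ∑ i ∈ s, ω i z) θ b := by
  have gaussLaplace_sum {ψ : ι → E → ℝ}
      (hψ : ∀ i ∈ s, Continuous (ψ i)) : gaussLaplace μ (fun z => ∑ i ∈ s, ψ i z) θ b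
        = ∑ i ∈ s, gaussLaplace μ (ψ i) θ b := by
    simp only [gaussLaplace, Finset.sum_mul]
    exact integral_finsetSum _ fun i hi => integrable_mul_exp_gaussian hμ (hψ i hi) θ b
  simp only [weightedSqMeanDeriv, Finset.sum_mul, Finset.sum_sub_distrib, ← Finset.mul_sum,
    gaussLaplace_sum hω, gaussLaplace_sum fun i hi => (hω i hi).fun_mul hφ]

variable [NeZero μ]

theorem hasDerivAt_sq_div {p q : ℝ → ℝ} {p' q' t : ℝ} (hp : HasDerivAt p p' t)
    (hq : HasDerivAt q q' t) (h0 : q t ≠ 0) :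
    HasDerivAt (fun s => p s ^ 2 / q s) (2 * (p t / q t) * p' - (p t / q t) ^ 2 * q') t := by
  convert! (hp.fun_pow 2).div hq h0 using 1
  field_simp
  ring

theorem hasLineDerivAt_weightedSqMean (hμ : ∀ᵐ z ∂μ, ‖z‖ ≤ R) (hφ : Continuous φ) (θ : ℝ)
    (b v : E) :
    HasLineDerivAt ℝ (weightedSqMean μ φ θ)
      (weightedSqMeanDeriv μ φ (fun z => ⟪v, z⟫_ℝ) θ b) b v := by
  have := hasDerivAt_sq_div (hasLineDerivAt_gaussLaplace hμ hφ θ b v)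
    (hasLineDerivAt_gaussLaplace hμ continuous_one θ b v) (gaussLaplace_one_pos hμ θ _).ne'
  simpa [HasLineDerivAt, weightedSqMean, weightedSqMeanDeriv, integral_gaussTilt] using this

theorem hasDerivAt_weightedSqMean (hμ : ∀ᵐ z ∂μ, ‖z‖ ≤ R) (hφ : Continuous φ) (θ : ℝ) (b : E) :
    HasDerivAt (fun θ => weightedSqMean μ φ θ b)
      (-weightedSqMeanDeriv μ φ (fun z => ‖z‖ ^ 2) θ b) θ := by
  convert! hasDerivAt_sq_div (hasDerivAt_gaussLaplace hμ hφ θ b)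
    (hasDerivAt_gaussLaplace hμ continuous_one θ b) (gaussLaplace_one_pos hμ θ b).ne' using 1
  simp only [weightedSqMeanDeriv, integral_gaussTilt, Pi.one_apply, mul_one]
  ring

theorem hasLineDerivAt_integral_gaussTilt (hμ : ∀ᵐ z ∂μ, ‖z‖ ≤ R) (hφ : Continuous φ) (θ : ℝ)
    (b v : E) :
    HasLineDerivAt ℝ (fun b => ∫ z, φ z ∂gaussTilt μ θ b)
      cov[fun z => ⟪v, z⟫_ℝ, φ; gaussTilt μ θ b] b v := by
  rw [covariance_gaussTilt hμ (by fun_prop) hφ]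
  simp only [integral_gaussTilt, HasLineDerivAt]
  convert! (hasLineDerivAt_gaussLaplace hμ hφ θ b v).div
    (hasLineDerivAt_gaussLaplace hμ continuous_one θ b v) (gaussLaplace_one_pos hμ θ _).ne' using 1
  have := (gaussLaplace_one_pos hμ θ b).ne'
  simp only [zero_smul, add_zero, Pi.one_apply, mul_one]
  field_simp

theorem hasLineDerivAt_weightedSqMeanDeriv (hμ : ∀ᵐ z ∂μ, ‖z‖ ≤ R) (hφ : Continuous φ) (θ : ℝ)
    (b v : E) :
    HasLineDerivAt ℝ (weightedSqMeanDeriv μ φ (fun z => ⟪v, z⟫_ℝ) θ)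
      (2 * gaussLaplace μ 1 θ b * cov[fun z => ⟪v, z⟫_ℝ, φ; gaussTilt μ θ b] ^ 2
        + weightedSqMeanDeriv μ φ (fun z => ⟪v, z⟫_ℝ * ⟪v, z⟫_ℝ) θ b) b v := by
  have mean_deriv := hasLineDerivAt_integral_gaussTilt hμ hφ θ b v
  have lin_deriv := hasLineDerivAt_gaussLaplace hμ (φ := fun z => ⟪v, z⟫_ℝ) (by fun_prop) θ b v
  have mul_deriv := hasLineDerivAt_gaussLaplace hμ (φ := fun z => ⟪v, z⟫_ℝ * φ z) (by fun_prop)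
    θ b v
  have mul_eq : gaussLaplace μ (fun z => ⟪v, z⟫_ℝ * φ z) θ b = gaussLaplace μ 1 θ b *
      (cov[fun z => ⟪v, z⟫_ℝ, φ; gaussTilt μ θ b]
        + (∫ z, ⟪v, z⟫_ℝ ∂gaussTilt μ θ b) * ∫ z, φ z ∂gaussTilt μ θ b) := by
    rw [covariance_gaussTilt hμ (by fun_prop) hφ, sub_add_cancel, integral_gaussTilt,
      mul_div_cancel₀ _ (gaussLaplace_one_pos hμ θ b).ne']
  have lin_eq : gaussLaplace μ (fun z => ⟪v, z⟫_ℝ) θ b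
      = gaussLaplace μ 1 θ b * ∫ z, ⟪v, z⟫_ℝ ∂gaussTilt μ θ b := by
    rw [integral_gaussTilt, mul_div_cancel₀ _ (gaussLaplace_one_pos hμ θ b).ne']
  rw [HasLineDerivAt]
  convert! ((mean_deriv.const_mul 2).mul mul_deriv).sub ((mean_deriv.fun_pow 2).mul lin_deriv)
    using 1
  simp only [zero_smul, add_zero, weightedSqMeanDeriv, mul_eq, lin_eq, mul_assoc]
  ring

-- The heat flow preserves these linear lower bounds for the convex expression `p ^ 2 / q`, so the
-- heat average of `weightedSqMean` is bounded below by Jensen's inequality.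
theorem two_mul_sub_le_weightedSqMean (hμ : ∀ᵐ z ∂μ, ‖z‖ ≤ R) (c θ : ℝ)
    (b : E) :
    2 * c * gaussLaplace μ φ θ b - c ^ 2 * gaussLaplace μ 1 θ b ≤ weightedSqMean μ φ θ b := by
  have pos := gaussLaplace_one_pos hμ θ b
  rw [weightedSqMean, le_div_iff₀ pos]
  linarith [sq_nonneg (gaussLaplace μ φ θ b - c * gaussLaplace μ 1 θ b)]

theorem gaussLaplace_one_mul_variance (hμ : ∀ᵐ z ∂μ, ‖z‖ ≤ R) (hφ : Continuous φ) (θ : ℝ)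
    (b : E) :
    gaussLaplace μ 1 θ b * Var[φ; gaussTilt μ θ b]
      = gaussLaplace μ (fun z => φ z * φ z) θ b - weightedSqMean μ φ θ b := by
  have := (gaussLaplace_one_pos hμ θ b).ne'
  rw [← ProbabilityTheory.covariance_self hφ.aemeasurable, covariance_gaussTilt hμ hφ hφ,
    integral_gaussTilt, integral_gaussTilt, weightedSqMean]
  field_simp

theorem weightedSqMean_le (hμ : ∀ᵐ z ∂μ, ‖z‖ ≤ R) (hφ : Continuous φ) (θ : ℝ)
    (b : E) :
    weightedSqMean μ φ θ b ≤ gaussLaplace μ (fun z => φ z * φ z) θ b := by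
  rw [← sub_nonneg, ← gaussLaplace_one_mul_variance hμ hφ]
  exact mul_nonneg (gaussLaplace_one_pos hμ θ b).le (ProbabilityTheory.variance_nonneg _ _)

end WeightedSqMean

section ExpTempered

variable {E : Type*} [NormedAddCommGroup E] {S S' : Set ℝ} {f g : ℝ → E → ℝ}

/-- Continuity in the second variable together with an exponential growth bound that is uniform
for the parameter in `S`: the functions that may be integrated against a heat kernel. -/
structure ExpTempered (S : Set ℝ) (f : ℝ → E → ℝ) : Prop where
  continuous : ∀ θ ∈ S, Continuous (f θ)
  growth : ∃ r, (fun p : ℝ × E => f p.1 p.2) =O[𝓟 (S ×ˢ univ)] fun p => exp (r * ‖p.2‖)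

namespace ExpTempered

theorem mono (hf : ExpTempered S f) (h : S' ⊆ S) : ExpTempered S' f where
  continuous θ hθ := hf.continuous θ (h hθ)
  growth := hf.growth.imp fun _ hr => hr.mono (principal_mono.2 (prod_mono_left h))

theorem of_abs_le {r C : ℝ} (hc : ∀ θ ∈ S, Continuous (f θ))
    (hC : ∀ θ ∈ S, ∀ b, |f θ b| ≤ C * exp (r * ‖b‖)) : ExpTempered S f where
  continuous := hc
  growth := ⟨r, Asymptotics.isBigO_principal.2 ⟨C, fun p hp => by
    simpa only [norm_eq_abs, abs_exp] using hC p.1 hp.1 p.2⟩⟩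

theorem of_bounded {M : ℝ} (hc : ∀ θ ∈ S, Continuous (f θ)) (hM : ∀ θ ∈ S, ∀ b, |f θ b| ≤ M) :
    ExpTempered S f :=
  of_abs_le (r := 0) (C := M) hc (by simpa using hM)

theorem add (hf : ExpTempered S f) (hg : ExpTempered S g) :
    ExpTempered S (fun θ b => f θ b + g θ b) where
  continuous θ hθ := (hf.continuous θ hθ).add (hg.continuous θ hθ)
  growth := by
    obtain ⟨r, hr⟩ := hf.growth
    obtain ⟨s, hs⟩ := hg.growth
    have exp_mono {r t : ℝ} (h : r ≤ t) :
        (fun p : ℝ × E => exp (r * ‖p.2‖)) =O[𝓟 (S ×ˢ univ)] fun p => exp (t * ‖p.2‖) :=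
      .of_norm_le fun p => by simp only [norm_eq_abs, abs_exp]; gcongr
    exact ⟨max r s, (hr.trans (exp_mono (le_max_left r s))).add
      (hs.trans (exp_mono (le_max_right r s)))⟩

theorem mul (hf : ExpTempered S f) (hg : ExpTempered S g) :
    ExpTempered S (fun θ b => f θ b * g θ b) where
  continuous θ hθ := (hf.continuous θ hθ).mul (hg.continuous θ hθ)
  growth := by
    obtain ⟨r, hr⟩ := hf.growth
    obtain ⟨s, hs⟩ := hg.growth
    refine ⟨r + s, (hr.mul hs).congr_right fun p => ?_⟩
    rw [← exp_add, add_mul]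

theorem const (c : ℝ) : ExpTempered S (fun _ (_ : E) => c) :=
  of_bounded (fun _ _ => continuous_const) fun _ _ _ => le_rfl

theorem const_mul (hf : ExpTempered S f) (c : ℝ) : ExpTempered S (fun θ b => c * f θ b) :=
  (const c).mul hf

theorem pow (hf : ExpTempered S f) (k : ℕ) : ExpTempered S (fun θ b => f θ b ^ k) := by
  induction k with
  | zero => simpa using const 1
  | succ k ih => simpa only [pow_succ] using ih.mul hf

theorem sub (hf : ExpTempered S f) (hg : ExpTempered S g) :
    ExpTempered S (fun θ b => f θ b - g θ b) := by
  simpa only [neg_one_mul, ← sub_eq_add_neg] using hf.add (hg.const_mul (-1))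

theorem sum {ι : Type*} (s : Finset ι) {f : ι → ℝ → E → ℝ} (hf : ∀ i ∈ s, ExpTempered S (f i)) :
    ExpTempered S (fun θ b => ∑ i ∈ s, f i θ b) := by
  classical
  induction s using Finset.induction_on with
  | empty => simpa using const 0
  | insert i s hi ih =>
    simp only [Finset.sum_insert hi]
    exact (hf i (Finset.mem_insert_self i s)).add
      (ih fun j hj => hf j (Finset.mem_insert_of_mem hj))

theorem of_lipschitz {K : ℝ≥0} {g : E → ℝ} (hg : LipschitzWith K g) :
    ExpTempered S (fun _ => g) := by
  refine of_abs_le (r := 1) (C := |g 0| + K) (fun _ _ => hg.continuous) fun _ _ b => ?_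
  have growth : |g b| ≤ |g 0| + K * ‖b‖ := by
    have := hg.norm_sub_le b 0
    rw [sub_zero, norm_eq_abs] at this
    linarith [abs_sub_abs_le_abs_sub (g b) (g 0)]
  have norm_le : ‖b‖ ≤ exp ‖b‖ := (le_add_of_nonneg_right zero_le_one).trans (add_one_le_exp _)
  have one_le : 1 ≤ exp ‖b‖ := one_le_exp (norm_nonneg b)
  calc |g b| ≤ |g 0| * 1 + K * ‖b‖ := by rwa [mul_one]
    _ ≤ |g 0| * exp ‖b‖ + K * exp ‖b‖ := by gcongr
    _ = (|g 0| + K) * exp (1 * ‖b‖) := by ring_nf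

end ExpTempered

end ExpTempered

section HeatKernel

variable {n : ℕ} {x y : EuclideanSpace ℝ (Fin n)} {τ : ℝ}

theorem heatK_pos (hτ : 0 < τ) : 0 < heatK n x y τ := by
  unfold heatK
  positivity

@[fun_prop]
theorem continuous_heatK : Continuous fun y => heatK n x y τ := by
  unfold heatK
  fun_prop

theorem integral_heatK (x : EuclideanSpace ℝ (Fin n)) (hτ : 0 < τ) :
    ∫ y, heatK n x y τ = 1 := by
  have gaussian := GaussianFourier.integral_rexp_neg_mul_sq_norm
    (V := EuclideanSpace ℝ (Fin n)) (b := 1 / (4 * τ)) (by positivity)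
  rw [finrank_euclideanSpace_fin, show π / (1 / (4 * τ)) = 4 * π * τ by field_simp] at gaussian
  simp only [heatK, integral_const_mul]
  rw [integral_sub_left_eq_self (fun z => exp (-‖z‖ ^ 2 / (4 * τ))),
    show (fun z : EuclideanSpace ℝ (Fin n) => exp (-‖z‖ ^ 2 / (4 * τ)))
      = fun z => exp (-(1 / (4 * τ)) * ‖z‖ ^ 2) by ext z; ring_nf,
    gaussian, ← rpow_add (by positivity), neg_div, neg_add_cancel, rpow_zero]

theorem integrable_heatK (x : EuclideanSpace ℝ (Fin n)) (hτ : 0 < τ) :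
    Integrable fun y => heatK n x y τ :=
  .of_integral_ne_zero (by simp [integral_heatK x hτ])

theorem heatK_le {a c : ℝ} (ha : 0 < a) (hτ : τ ∈ Icc a c) :
    heatK n x y τ ≤ (c / a) ^ ((n : ℝ) / 2) * heatK n x y c := by
  obtain ⟨haτ, hτc⟩ := hτ
  have hτ0 : 0 < τ := ha.trans_le haτ
  have hc : 0 < c := hτ0.trans_le hτc
  have scale : (4 * π * a) ^ (-(n : ℝ) / 2)
      = (c / a) ^ ((n : ℝ) / 2) * (4 * π * c) ^ (-(n : ℝ) / 2) := by
    rw [neg_div, rpow_neg (by positivity), rpow_neg (by positivity), ← inv_rpow (by positivity),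
      ← inv_rpow (by positivity), ← mul_rpow (by positivity) (by positivity)]
    congr 1
    field_simp
  unfold heatK
  calc (4 * π * τ) ^ (-(n : ℝ) / 2) * exp (-‖x - y‖ ^ 2 / (4 * τ))
      ≤ (4 * π * a) ^ (-(n : ℝ) / 2) * exp (-‖x - y‖ ^ 2 / (4 * c)) := by
        refine mul_le_mul (rpow_le_rpow_of_nonpos (by positivity) (by gcongr) ?_) ?_
          (exp_pos _).le (by positivity)
        · rw [neg_div, neg_nonpos]; positivity
        · rw [neg_div, neg_div]; gcongr
    _ = _ := by rw [scale, mul_assoc]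

theorem exp_mul_norm_mul_heatK_le (r : ℝ) (hτ : 0 < τ) :
    exp (r * ‖y‖) * heatK n x y τ
      ≤ exp (|r| * ‖x‖ + 2 * r ^ 2 * τ) * 2 ^ ((n : ℝ) / 2) * heatK n x y (2 * τ) := by
  have scale : (4 * π * τ) ^ (-(n : ℝ) / 2)
      = 2 ^ ((n : ℝ) / 2) * (4 * π * (2 * τ)) ^ (-(n : ℝ) / 2) := by
    rw [show 4 * π * (2 * τ) = 2 * (4 * π * τ) by ring, mul_rpow zero_le_two (by positivity),
      ← mul_assoc, ← rpow_add two_pos, neg_div, add_neg_cancel, rpow_zero, one_mul]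
  have norm_le : ‖y‖ ≤ ‖x‖ + ‖x - y‖ := norm_le_norm_add_norm_sub x y
  have square : |r| * ‖x - y‖ - ‖x - y‖ ^ 2 / (4 * τ)
      ≤ 2 * r ^ 2 * τ - ‖x - y‖ ^ 2 / (4 * (2 * τ)) := by
    have : 2 * r ^ 2 * τ - ‖x - y‖ ^ 2 / (4 * (2 * τ)) - (|r| * ‖x - y‖ - ‖x - y‖ ^ 2 / (4 * τ))
        = (‖x - y‖ - 4 * τ * |r|) ^ 2 / (8 * τ) := by
      rw [← sq_abs r]
      field_simp
      ring
    have : 0 ≤ (‖x - y‖ - 4 * τ * |r|) ^ 2 / (8 * τ) := by positivity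
    linarith
  have exponent : r * ‖y‖ + -‖x - y‖ ^ 2 / (4 * τ)
      ≤ |r| * ‖x‖ + 2 * r ^ 2 * τ + -‖x - y‖ ^ 2 / (4 * (2 * τ)) := by
    have : r * ‖y‖ ≤ |r| * (‖x‖ + ‖x - y‖) := by gcongr; exact le_abs_self r
    rw [neg_div, neg_div]
    linarith
  calc exp (r * ‖y‖) * heatK n x y τ
      = (4 * π * τ) ^ (-(n : ℝ) / 2) * exp (r * ‖y‖ + -‖x - y‖ ^ 2 / (4 * τ)) := by
        rw [heatK, exp_add]; ring
    _ ≤ (4 * π * τ) ^ (-(n : ℝ) / 2)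
          * exp (|r| * ‖x‖ + 2 * r ^ 2 * τ + -‖x - y‖ ^ 2 / (4 * (2 * τ))) := by gcongr
    _ = _ := by rw [heatK, exp_add, scale]; ring

theorem ExpTempered.exists_integrable_bound_mul_heatK {S : Set ℝ}
    {f : ℝ → EuclideanSpace ℝ (Fin n) → ℝ} (hf : ExpTempered S f) (x : EuclideanSpace ℝ (Fin n))
    {a c : ℝ} (ha : 0 < a) (hac : a ≤ c) :
    ∃ bound : EuclideanSpace ℝ (Fin n) → ℝ, Integrable bound ∧
      ∀ θ ∈ S, ∀ τ ∈ Icc a c, ∀ y, ‖f θ y * heatK n x y τ‖ ≤ bound y := by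
  obtain ⟨r, hr⟩ := hf.growth
  obtain ⟨C, hC⟩ := Asymptotics.isBigO_principal.1 hr
  have hc : 0 < c := ha.trans_le hac
  refine ⟨fun y => |C| * (c / a) ^ ((n : ℝ) / 2) * (exp (|r| * ‖x‖ + 2 * r ^ 2 * c)
    * 2 ^ ((n : ℝ) / 2)) * heatK n x y (2 * c),
    (integrable_heatK x (by positivity)).const_mul _, fun θ hθ τ hτ y => ?_⟩
  have growth : ‖f θ y‖ ≤ |C| * exp (r * ‖y‖) := by
    refine (hC (θ, y) ⟨hθ, trivial⟩).trans ?_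
    rw [norm_of_nonneg (exp_pos _).le]
    gcongr
    exact le_abs_self C
  calc ‖f θ y * heatK n x y τ‖ = ‖f θ y‖ * heatK n x y τ := by
        rw [norm_mul, norm_of_nonneg (heatK_pos (ha.trans_le hτ.1)).le]
    _ ≤ |C| * exp (r * ‖y‖) * ((c / a) ^ ((n : ℝ) / 2) * heatK n x y c) :=
        mul_le_mul growth (heatK_le ha hτ) (heatK_pos (ha.trans_le hτ.1)).le (by positivity)
    _ = |C| * (c / a) ^ ((n : ℝ) / 2) * (exp (r * ‖y‖) * heatK n x y c) := by ring
    _ ≤ _ := (mul_le_mul_of_nonneg_left (exp_mul_norm_mul_heatK_le r hc)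
        (by positivity)).trans_eq (by ring)

theorem ExpTempered.integrable_mul_heatK {S : Set ℝ} {θ : ℝ}
    {f : ℝ → EuclideanSpace ℝ (Fin n) → ℝ} (hf : ExpTempered S f) (hθ : θ ∈ S)
    (x : EuclideanSpace ℝ (Fin n)) (hτ : 0 < τ) :
    Integrable fun y => f θ y * heatK n x y τ := by
  obtain ⟨bound, bound_int, hbound⟩ := hf.exists_integrable_bound_mul_heatK x hτ le_rfl
  exact bound_int.mono' ((hf.continuous θ hθ).mul continuous_heatK).aestronglyMeasurable
    (.of_forall (hbound θ hθ τ ⟨le_rfl, le_rfl⟩))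

theorem hasLineDerivAt_heatK (x y v : EuclideanSpace ℝ (Fin n)) (τ : ℝ) :
    HasLineDerivAt ℝ (fun y => heatK n x y τ) (⟪v, x - y⟫_ℝ / (2 * τ) * heatK n x y τ) y v := by
  have exponent : HasLineDerivAt ℝ (fun y => -‖x - y‖ ^ 2 / (4 * τ))
      (⟪v, x - y⟫_ℝ / (2 * τ)) y v := by
    have := ((hasFDerivAt_id y).const_sub x).norm_sq.neg.mul_const (4 * τ)⁻¹
    convert! this.hasLineDerivAt v using 1
    simp only [inner_sub_right, mul_inv_rev, id_eq, map_sub, ContinuousLinearMap.comp_neg,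
      ContinuousLinearMap.comp_id, neg_sub, smul_neg, neg_apply, smul_apply, sub_apply,
      coe_innerSL_apply, real_inner_comm v, nsmul_eq_mul, Nat.cast_ofNat, smul_eq_mul]
    ring
  rw [HasLineDerivAt] at exponent ⊢
  convert! exponent.exp.const_mul ((4 * π * τ) ^ (-(n : ℝ) / 2)) using 1
  simp only [heatK, zero_smul, add_zero]
  ring

theorem hasLineDerivAt_inner_mul_heatK (x y v : EuclideanSpace ℝ (Fin n)) (τ : ℝ) :
    HasLineDerivAt ℝ (fun y => ⟪v, x - y⟫_ℝ / (2 * τ) * heatK n x y τ)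
      ((⟪v, x - y⟫_ℝ ^ 2 / (4 * τ ^ 2) - ‖v‖ ^ 2 / (2 * τ)) * heatK n x y τ) y v := by
  have linear : HasLineDerivAt ℝ (fun y => ⟪v, x - y⟫_ℝ / (2 * τ)) (-‖v‖ ^ 2 / (2 * τ)) y v := by
    have := ((hasFDerivAt_const v y).inner ℝ ((hasFDerivAt_id y).const_sub x)).mul_const (2 * τ)⁻¹
    convert! this.hasLineDerivAt v using 1
    simp only [mul_inv_rev, id_eq, smul_apply, ContinuousLinearMap.comp_apply,
      ContinuousLinearMap.prod_apply, zero_apply, neg_apply, ContinuousLinearMap.id_apply,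
      fderivInnerCLM_apply, inner_neg_right, inner_self_eq_norm_sq_to_K, ringHom_apply,
      inner_zero_left, add_zero, smul_eq_mul, mul_neg]
    ring
  have kernel := hasLineDerivAt_heatK x y v τ
  rw [HasLineDerivAt] at linear kernel ⊢
  convert! linear.mul kernel using 1
  simp only [zero_smul, add_zero]
  ring

theorem hasDerivAt_heatK (hτ : 0 < τ) :
    HasDerivAt (heatK n x y) ((‖x - y‖ ^ 2 / (4 * τ ^ 2) - n / (2 * τ)) * heatK n x y τ) τ := by
  have normalization : HasDerivAt (fun τ => (4 * π * τ) ^ (-(n : ℝ) / 2))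
      (-(n / (2 * τ)) * (4 * π * τ) ^ (-(n : ℝ) / 2)) τ := by
    convert! ((hasDerivAt_id τ).const_mul (4 * π)).rpow_const (p := -(n : ℝ) / 2)
      (.inl (by simp only [id_eq]; positivity)) using 1
    rw [id_eq, rpow_sub_one (by positivity)]
    field_simp
  have exponent : HasDerivAt (fun τ => -‖x - y‖ ^ 2 / (4 * τ)) (‖x - y‖ ^ 2 / (4 * τ ^ 2)) τ := by
    convert! ((hasDerivAt_inv hτ.ne').const_mul (-‖x - y‖ ^ 2 / 4)) using 1
    · ext σ; field_simp
    · field_simp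
  convert! normalization.mul exponent.exp using 1
  rw [heatK]
  ring

end HeatKernel

section Evolution

variable {n : ℕ} {S : Set ℝ} {f f' : ℝ → EuclideanSpace ℝ (Fin n) → ℝ} {θ : ℝ}

theorem expTempered_inner_sub (x v : EuclideanSpace ℝ (Fin n)) :
    ExpTempered S (fun _ b => ⟪v, x - b⟫_ℝ) := by
  simpa only [inner_sub_right, innerSL_apply_apply] using
    (ExpTempered.const ⟪v, x⟫_ℝ).sub (.of_lipschitz (innerSL ℝ v).lipschitz)

theorem expTempered_inner_sub_sq (x v : EuclideanSpace ℝ (Fin n)) (τ : ℝ) :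
    ExpTempered S (fun _ b => ⟪v, x - b⟫_ℝ ^ 2 / (4 * τ ^ 2) - ‖v‖ ^ 2 / (2 * τ)) := by
  simpa only [div_eq_mul_inv] using (((expTempered_inner_sub x v).pow 2).mul
    (.const (4 * τ ^ 2)⁻¹)).sub (.const (‖v‖ ^ 2 * (2 * τ)⁻¹))

theorem integral_mul_hasLineDerivAt_heatK {f₁ : ℝ → EuclideanSpace ℝ (Fin n) → ℝ}
    {g g' : EuclideanSpace ℝ (Fin n) → ℝ}
    (x v : EuclideanSpace ℝ (Fin n)) {τ : ℝ} (hτ : 0 < τ) (hθ : θ ∈ S)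
    (hf : ExpTempered S f) (hf₁ : ExpTempered S f₁) (hg : ExpTempered S (fun _ => g))
    (hg' : ExpTempered S (fun _ => g'))
    (hdf : ∀ b, HasLineDerivAt ℝ (f θ) (f₁ θ b) b v)
    (hdg : ∀ b, HasLineDerivAt ℝ (fun b => g b * heatK n x b τ) (g' b * heatK n x b τ) b v) :
    ∫ b, f θ b * g' b * heatK n x b τ = -∫ b, f₁ θ b * g b * heatK n x b τ := by
  have := integral_bilinear_hasLineDerivAt_right_eq_neg_left_of_integrable
    (B := ContinuousLinearMap.mul ℝ ℝ) (μ := volume)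
    (by simpa [mul_assoc] using (hf₁.mul hg).integrable_mul_heatK hθ x hτ)
    (by simpa [mul_assoc] using (hf.mul hg').integrable_mul_heatK hθ x hτ)
    (by simpa [mul_assoc] using (hf.mul hg).integrable_mul_heatK hθ x hτ)
    (fun b _ => hdf b) (fun b _ => hdg b)
  simpa [mul_assoc] using this

theorem integral_mul_hasLineDerivAt_hasLineDerivAt_heatK
    {f₁ f₂ : ℝ → EuclideanSpace ℝ (Fin n) → ℝ}
    (x v : EuclideanSpace ℝ (Fin n)) {τ : ℝ} (hτ : 0 < τ) (hθ : θ ∈ S)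
    (hf : ExpTempered S f) (hf₁ : ExpTempered S f₁) (hf₂ : ExpTempered S f₂)
    (hdf : ∀ b, HasLineDerivAt ℝ (f θ) (f₁ θ b) b v)
    (hdf₁ : ∀ b, HasLineDerivAt ℝ (f₁ θ) (f₂ θ b) b v) :
    ∫ b, f θ b * (⟪v, x - b⟫_ℝ ^ 2 / (4 * τ ^ 2) - ‖v‖ ^ 2 / (2 * τ)) * heatK n x b τ
      = ∫ b, f₂ θ b * heatK n x b τ := by
  have slope : ExpTempered S (fun _ b => ⟪v, x - b⟫_ℝ / (2 * τ)) := by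
    simpa only [div_eq_mul_inv] using (expTempered_inner_sub x v).mul (.const (2 * τ)⁻¹)
  rw [integral_mul_hasLineDerivAt_heatK x v hτ hθ hf hf₁ slope
      (expTempered_inner_sub_sq x v τ) hdf fun b => hasLineDerivAt_inner_mul_heatK x b v τ,
    integral_mul_hasLineDerivAt_heatK x v hτ hθ hf₁ hf₂ (.const 1) slope hdf₁
      (by simpa using fun b => hasLineDerivAt_heatK x b v τ), neg_neg]
  simp only [mul_one]

theorem expTempered_norm_sub_sq (x : EuclideanSpace ℝ (Fin n)) (θ₀ : ℝ) {δ : ℝ} (hδ : 0 < δ) :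
    ExpTempered (Ici (θ₀ + δ))
      (fun θ b => ‖x - b‖ ^ 2 / (4 * (θ - θ₀) ^ 2) - n / (2 * (θ - θ₀))) := by
  have inv_tempered : ExpTempered (Ici (θ₀ + δ))
      (fun θ (_ : EuclideanSpace ℝ (Fin n)) => (θ - θ₀)⁻¹) := by
    refine .of_bounded (M := δ⁻¹) (fun _ _ => continuous_const) fun θ hθ _ => ?_
    have : δ ≤ θ - θ₀ := le_sub_iff_add_le'.2 hθ
    rw [abs_of_nonneg (inv_nonneg.2 (by linarith))]
    gcongr
  have dist_tempered : ExpTempered (Ici (θ₀ + δ)) (fun _ b => ‖x - b‖) :=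
    .of_lipschitz (K := 1) (by convert! LipschitzWith.dist_right x using 2)
  convert! (((dist_tempered.mul inv_tempered).pow 2).mul (.const (1 / 4))).sub
    (inv_tempered.mul (.const (n / 2))) using 4
  · field_simp
  · rw [mul_comm 2, div_mul_eq_div_div_swap, div_eq_inv_mul]

theorem hasDerivAt_integral_mul_heatK_of_expTempered (x : EuclideanSpace ℝ (Fin n)) {θ₀ : ℝ}
    (hS : S ∈ 𝓝 θ) (hθ : θ₀ < θ) (hf : ExpTempered S f) (hf' : ExpTempered S f')
    (hdf : ∀ θ ∈ S, ∀ b, HasDerivAt (fun θ => f θ b) (f' θ b) θ) :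
    HasDerivAt (fun θ => ∫ b, f θ b * heatK n x b (θ - θ₀))
      (∫ b, (f' θ b + f θ b * (‖x - b‖ ^ 2 / (4 * (θ - θ₀) ^ 2) - n / (2 * (θ - θ₀))))
        * heatK n x b (θ - θ₀)) θ := by
  obtain ⟨τ, hτ⟩ : ∃ τ, τ = θ - θ₀ := ⟨_, rfl⟩
  have τ_pos : 0 < τ := by rw [hτ]; linarith
  set S' := S ∩ Icc (θ - τ / 2) (θ + τ)
  have deriv_tempered : ExpTempered S' fun θ b =>
      f' θ b + f θ b * (‖x - b‖ ^ 2 / (4 * (θ - θ₀) ^ 2) - n / (2 * (θ - θ₀))) :=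
    (hf'.mono inter_subset_left).add ((hf.mono inter_subset_left).mul
      ((expTempered_norm_sub_sq x θ₀ (half_pos τ_pos)).mono fun σ hσ =>
        mem_Ici.2 (by linarith [hσ.2.1])))
  have mem : S' ∈ 𝓝 θ := inter_mem hS (Icc_mem_nhds (by linarith) (by linarith))
  obtain ⟨bound, bound_int, hbound⟩ := deriv_tempered.exists_integrable_bound_mul_heatK x
    (half_pos τ_pos) (show τ / 2 ≤ 2 * τ by linarith)
  refine (hasDerivAt_integral_of_dominated_loc_of_deriv_le
    (F := fun θ b => f θ b * heatK n x b (θ - θ₀))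
    (F' := fun θ b => (f' θ b + f θ b * (‖x - b‖ ^ 2 / (4 * (θ - θ₀) ^ 2) - n / (2 * (θ - θ₀))))
      * heatK n x b (θ - θ₀)) mem ?_ (hf.integrable_mul_heatK (mem_of_mem_nhds hS) x
    (sub_pos.2 hθ)) ?_ ?_ bound_int ?_).2
  · filter_upwards [hS] with σ hσ
    exact ((hf.continuous σ hσ).mul continuous_heatK).aestronglyMeasurable
  · exact (deriv_tempered.integrable_mul_heatK (mem_of_mem_nhds mem) x
      (sub_pos.2 hθ)).aestronglyMeasurable
  · exact .of_forall fun b σ hσ => hbound σ hσ _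
      ⟨by linarith [hσ.2.1], by linarith [hσ.2.2]⟩ b
  · refine .of_forall fun b σ hσ => ?_
    have pos : 0 < σ - θ₀ := by linarith [hσ.2.1]
    convert! (hdf σ hσ.1 b).mul ((hasDerivAt_heatK pos).comp_sub_const σ θ₀) using 1
    ring

theorem hasDerivAt_integral_mul_heatK {f₁ f₂ : Fin n → ℝ → EuclideanSpace ℝ (Fin n) → ℝ}
    (x : EuclideanSpace ℝ (Fin n)) {θ₀ : ℝ}
    (hS : S ∈ 𝓝 θ) (hθ : θ₀ < θ) (hf : ExpTempered S f) (hf' : ExpTempered S f')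
    (hf₁ : ∀ j, ExpTempered S (f₁ j)) (hf₂ : ∀ j, ExpTempered S (f₂ j))
    (hdf : ∀ θ ∈ S, ∀ b, HasDerivAt (fun θ => f θ b) (f' θ b) θ)
    (hdf₁ : ∀ j b, HasLineDerivAt ℝ (f θ) (f₁ j θ b) b (EuclideanSpace.single j 1))
    (hdf₂ : ∀ j b, HasLineDerivAt ℝ (f₁ j θ) (f₂ j θ b) b (EuclideanSpace.single j 1)) :
    HasDerivAt (fun θ => ∫ b, f θ b * heatK n x b (θ - θ₀))
      (∫ b, (f' θ b + ∑ j, f₂ j θ b) * heatK n x b (θ - θ₀)) θ := by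
  have mem := mem_of_mem_nhds hS
  have pos := sub_pos.2 hθ
  have integral_add_sum {g : Fin n → ℝ → EuclideanSpace ℝ (Fin n) → ℝ}
      (hg : ∀ j, ExpTempered S (g j)) :
      ∫ b, (f' θ b + ∑ j, g j θ b) * heatK n x b (θ - θ₀)
        = (∫ b, f' θ b * heatK n x b (θ - θ₀)) + ∑ j, ∫ b, g j θ b * heatK n x b (θ - θ₀) := by
    have hg_int j := (hg j).integrable_mul_heatK mem x pos
    rw [← integral_finsetSum _ fun j _ => hg_int j,
      ← integral_add (hf'.integrable_mul_heatK mem x pos)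
        (integrable_finsetSum _ fun j _ => hg_int j)]
    simp only [add_mul, Finset.sum_mul]
  convert! hasDerivAt_integral_mul_heatK_of_expTempered x hS hθ hf hf' hdf using 1
  set τ := θ - θ₀
  have green j := integral_mul_hasLineDerivAt_hasLineDerivAt_heatK x (EuclideanSpace.single j 1)
    pos mem hf (hf₁ j) (hf₂ j) (hdf₁ j) (hdf₂ j)
  have multiplier j : ExpTempered S fun θ b => f θ b *
      (⟪EuclideanSpace.single j 1, x - b⟫_ℝ ^ 2 / (4 * τ ^ 2)
        - ‖EuclideanSpace.single j (1 : ℝ)‖ ^ 2 / (2 * τ)) :=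
    hf.mul (expTempered_inner_sub_sq x _ τ)
  rw [integral_add_sum hf₂, ← Finset.sum_congr rfl fun j _ => green j,
    ← integral_add_sum multiplier]
  congr! with b
  rw [← Finset.mul_sum, Finset.sum_sub_distrib, ← Finset.sum_div]
  simp [EuclideanSpace.norm_sq_eq, EuclideanSpace.inner_single_left, div_eq_mul_inv]

end Evolution

section Dissipation

variable {n : ℕ} {μ : Measure (EuclideanSpace ℝ (Fin n))} [IsFiniteMeasure μ]
  {φ ψ ω : EuclideanSpace ℝ (Fin n) → ℝ} {R θ : ℝ}

theorem expTempered_gaussLaplace (hμ : ∀ᵐ z ∂μ, ‖z‖ ≤ R) (hφ : Continuous φ) :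
    ExpTempered (Ici 0) (gaussLaplace μ φ) := by
  obtain ⟨M, hM⟩ := exists_ae_abs_le_of_continuous hμ hφ
  exact .of_abs_le (fun θ _ => continuous_gaussLaplace hμ hφ θ)
    fun θ hθ b => abs_gaussLaplace_le hμ hM hθ b

theorem exp_gaussian_mul_heatK (x b z : EuclideanSpace ℝ (Fin n)) {τ : ℝ} (hτ : τ ≠ 0) :
    exp (⟪b, z⟫_ℝ - θ * ‖z‖ ^ 2) * heatK n x b τ
      = exp (⟪x, z⟫_ℝ - (θ - τ) * ‖z‖ ^ 2) * heatK n (x + (2 * τ) • z) b τ := by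
  have norm_sq : ‖x + (2 * τ) • z - b‖ ^ 2
      = ‖x - b‖ ^ 2 + 4 * τ * (⟪x, z⟫_ℝ - ⟪b, z⟫_ℝ) + 4 * τ ^ 2 * ‖z‖ ^ 2 := by
    rw [add_sub_right_comm, norm_add_sq_real, inner_smul_right, inner_sub_left, norm_smul, mul_pow,
      norm_eq_abs, sq_abs]
    ring
  rw [heatK, heatK, mul_left_comm, mul_left_comm (exp _), ← exp_add, ← exp_add, norm_sq]
  congr 2
  field_simp
  ring

theorem integral_gaussLaplace_mul_heatK (hμ : ∀ᵐ z ∂μ, ‖z‖ ≤ R) (hφ : Continuous φ)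
    (x : EuclideanSpace ℝ (Fin n)) {θ₀ : ℝ} (hθ : θ₀ < θ) :
    ∫ b, gaussLaplace μ φ θ b * heatK n x b (θ - θ₀) = gaussLaplace μ φ θ₀ x := by
  have pos := sub_pos.2 hθ
  have shift (z b : EuclideanSpace ℝ (Fin n)) :
      φ z * exp (⟪b, z⟫_ℝ - θ * ‖z‖ ^ 2) * heatK n x b (θ - θ₀) = φ z *
        exp (⟪x, z⟫_ℝ - θ₀ * ‖z‖ ^ 2) * heatK n (x + (2 * (θ - θ₀)) • z) b (θ - θ₀) := by
    rw [mul_assoc, exp_gaussian_mul_heatK x b z pos.ne', sub_sub_cancel, mul_assoc]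
  have integrable : Integrable (fun p : EuclideanSpace ℝ (Fin n) × EuclideanSpace ℝ (Fin n) =>
      φ p.1 * exp (⟪p.2, p.1⟫_ℝ - θ * ‖p.1‖ ^ 2) * heatK n x p.2 (θ - θ₀)) (μ.prod volume) := by
    refine (integrable_prod_iff ?_).2 ⟨?_, ?_⟩
    · have := continuous_heatK (x := x) (τ := θ - θ₀)
      exact Continuous.aestronglyMeasurable (by fun_prop)
    · simp only [shift]
      exact .of_forall fun z => (integrable_heatK _ pos).const_mul _
    · simp only [shift, norm_mul, norm_of_nonneg (heatK_pos pos).le, integral_const_mul,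
        integral_heatK _ pos, mul_one, norm_of_nonneg (exp_pos _).le]
      exact integrable_mul_exp_gaussian hμ hφ.norm θ₀ x
  simp only [gaussLaplace, ← integral_mul_const]
  rw [← integral_integral_swap integrable]
  simp only [shift, integral_const_mul, integral_heatK _ pos, mul_one]

variable [NeZero μ]

theorem expTempered_integral_gaussTilt (hμ : ∀ᵐ z ∂μ, ‖z‖ ≤ R) (hφ : Continuous φ) :
    ExpTempered (Ici 0) (fun θ b => ∫ z, φ z ∂gaussTilt μ θ b) := by
  obtain ⟨M, hM⟩ := exists_ae_abs_le_of_continuous hμ hφ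
  refine .of_bounded (M := M) (fun θ _ => ?_) fun θ _ b => ?_
  · simp only [integral_gaussTilt]
    exact (continuous_gaussLaplace hμ hφ θ).div (continuous_gaussLaplace hμ continuous_one θ)
      fun b => (gaussLaplace_one_pos hμ θ b).ne'
  · have := isProbabilityMeasure_gaussTilt hμ θ b
    exact abs_integral_gaussTilt_le hM

theorem expTempered_covariance (hμ : ∀ᵐ z ∂μ, ‖z‖ ≤ R) (hφ : Continuous φ) (hψ : Continuous ψ) :
    ExpTempered (Ici 0) (fun θ b => cov[φ, ψ; gaussTilt μ θ b]) := by
  have := (expTempered_integral_gaussTilt hμ (hφ.fun_mul hψ)).sub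
    ((expTempered_integral_gaussTilt hμ hφ).mul (expTempered_integral_gaussTilt hμ hψ))
  convert! this using 3
  exact covariance_gaussTilt hμ hφ hψ _ _

theorem expTempered_weightedSqMean (hμ : ∀ᵐ z ∂μ, ‖z‖ ≤ R) (hφ : Continuous φ) :
    ExpTempered (Ici 0) (weightedSqMean μ φ) := by
  convert! (expTempered_gaussLaplace hμ hφ).mul (expTempered_integral_gaussTilt hμ hφ) using 3
  rw [weightedSqMean, integral_gaussTilt, sq, mul_div_assoc]

theorem expTempered_weightedSqMeanDeriv (hμ : ∀ᵐ z ∂μ, ‖z‖ ≤ R) (hφ : Continuous φ)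
    (hω : Continuous ω) : ExpTempered (Ici 0) (weightedSqMeanDeriv μ φ ω) := by
  have mean := expTempered_integral_gaussTilt hμ hφ
  exact (((ExpTempered.const 2).mul mean).mul (expTempered_gaussLaplace hμ (hω.fun_mul hφ))).sub
    ((mean.pow 2).mul (expTempered_gaussLaplace hμ hω))

theorem weightedSqMean_le_integral_mul_heatK (hμ : ∀ᵐ z ∂μ, ‖z‖ ≤ R) (hφ : Continuous φ)
    (x : EuclideanSpace ℝ (Fin n)) {θ₀ : ℝ} (hθ₀ : 0 ≤ θ₀) (hθ : θ₀ < θ) :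
    weightedSqMean μ φ θ₀ x ≤ ∫ b, weightedSqMean μ φ θ b * heatK n x b (θ - θ₀) := by
  have pos := sub_pos.2 hθ
  have mem : θ ∈ Ici (0 : ℝ) := hθ₀.trans hθ.le
  set c := gaussLaplace μ φ θ₀ x / gaussLaplace μ 1 θ₀ x
  have linear := (expTempered_gaussLaplace hμ hφ).const_mul (2 * c)
  have mass := (expTempered_gaussLaplace hμ continuous_one).const_mul (c ^ 2)
  calc weightedSqMean μ φ θ₀ x
      = 2 * c * gaussLaplace μ φ θ₀ x - c ^ 2 * gaussLaplace μ 1 θ₀ x := by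
        have := (gaussLaplace_one_pos hμ θ₀ x).ne'
        simp only [weightedSqMean, c]
        field_simp
        ring
    _ = ∫ b, (2 * c * gaussLaplace μ φ θ b - c ^ 2 * gaussLaplace μ 1 θ b)
          * heatK n x b (θ - θ₀) := by
        rw [← integral_gaussLaplace_mul_heatK hμ hφ x hθ,
          ← integral_gaussLaplace_mul_heatK hμ continuous_one x hθ, ← integral_const_mul,
          ← integral_const_mul, ← integral_sub]
        · simp only [sub_mul, mul_assoc]
        · simpa only [mul_assoc] using linear.integrable_mul_heatK mem x pos
        · simpa only [mul_assoc] using mass.integrable_mul_heatK mem x pos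
    _ ≤ _ := by
        refine integral_mono ((linear.sub mass).integrable_mul_heatK mem x pos)
          ((expTempered_weightedSqMean hμ hφ).integrable_mul_heatK mem x pos) fun b => ?_
        exact mul_le_mul_of_nonneg_right (two_mul_sub_le_weightedSqMean hμ c θ b)
          (heatK_pos pos).le

theorem integral_weightedSqMean_mul_heatK_le (hμ : ∀ᵐ z ∂μ, ‖z‖ ≤ R) (hφ : Continuous φ)
    (x : EuclideanSpace ℝ (Fin n)) {θ₀ : ℝ} (hθ₀ : 0 ≤ θ₀) (hθ : θ₀ < θ) :
    ∫ b, weightedSqMean μ φ θ b * heatK n x b (θ - θ₀)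
      ≤ gaussLaplace μ (fun z => φ z * φ z) θ₀ x := by
  have pos := sub_pos.2 hθ
  have mem : θ ∈ Ici (0 : ℝ) := hθ₀.trans hθ.le
  rw [← integral_gaussLaplace_mul_heatK hμ (hφ.fun_mul hφ) x hθ]
  exact integral_mono ((expTempered_weightedSqMean hμ hφ).integrable_mul_heatK mem x pos)
    ((expTempered_gaussLaplace hμ (hφ.fun_mul hφ)).integrable_mul_heatK mem x pos) fun b =>
      mul_le_mul_of_nonneg_right (weightedSqMean_le hμ hφ θ b) (heatK_pos pos).le

/-- Half the rate at which the heat average of `weightedSqMean μ φ` at `x` increases with the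
parameter `θ`, when the averaging time is `τ`. -/
noncomputable def dissipation (μ : Measure (EuclideanSpace ℝ (Fin n)))
    (φ : EuclideanSpace ℝ (Fin n) → ℝ) (x : EuclideanSpace ℝ (Fin n)) (θ τ : ℝ) : ℝ :=
  ∫ b, gaussLaplace μ 1 θ b * (∑ j, cov[fun z => z j, φ; gaussTilt μ θ b] ^ 2) * heatK n x b τ

theorem expTempered_sum_covariance_sq (hμ : ∀ᵐ z ∂μ, ‖z‖ ≤ R) (hφ : Continuous φ) :
    ExpTempered (Ici 0) (fun θ b => gaussLaplace μ 1 θ b *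
      ∑ j, cov[fun z => z j, φ; gaussTilt μ θ b] ^ 2) :=
  (expTempered_gaussLaplace hμ continuous_one).mul
    (.sum _ fun _ _ => (expTempered_covariance hμ (by fun_prop) hφ).pow 2)

theorem dissipation_nonneg (hμ : ∀ᵐ z ∂μ, ‖z‖ ≤ R) (x : EuclideanSpace ℝ (Fin n)) {τ : ℝ}
    (hτ : 0 < τ) : 0 ≤ dissipation μ φ x θ τ :=
  integral_nonneg fun b => mul_nonneg (mul_nonneg (gaussLaplace_one_pos hμ θ b).le
    (Finset.sum_nonneg fun _ _ => sq_nonneg _)) (heatK_pos hτ).le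

theorem sum_dissipation {ι : Type*} (s : Finset ι) {φ : ι → EuclideanSpace ℝ (Fin n) → ℝ}
    (hμ : ∀ᵐ z ∂μ, ‖z‖ ≤ R) (hφ : ∀ i ∈ s, Continuous (φ i)) (x : EuclideanSpace ℝ (Fin n))
    {θ τ : ℝ} (hθ : 0 ≤ θ) (hτ : 0 < τ) :
    ∑ i ∈ s, dissipation μ (φ i) x θ τ = ∫ b, gaussLaplace μ 1 θ b *
      (∑ i ∈ s, ∑ j, cov[fun z => z j, φ i; gaussTilt μ θ b] ^ 2) * heatK n x b τ := by
  simp only [dissipation, Finset.mul_sum _ (fun _ => Finset.sum _ _), Finset.sum_mul s]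
  exact (integral_finsetSum _ fun i hi =>
    (expTempered_sum_covariance_sq hμ (hφ i hi)).integrable_mul_heatK hθ x hτ).symm

theorem hasDerivAt_integral_weightedSqMean_mul_heatK (hμ : ∀ᵐ z ∂μ, ‖z‖ ≤ R) (hφ : Continuous φ)
    (x : EuclideanSpace ℝ (Fin n)) {θ₀ : ℝ} (hθ₀ : 0 ≤ θ₀) (hθ : θ₀ < θ) :
    HasDerivAt (fun θ => ∫ b, weightedSqMean μ φ θ b * heatK n x b (θ - θ₀))
      (2 * dissipation μ φ x θ (θ - θ₀)) θ := by
  have coord (j : Fin n) (z : EuclideanSpace ℝ (Fin n)) :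
      ⟪EuclideanSpace.single j 1, z⟫_ℝ = z j := by simp [EuclideanSpace.inner_single_left]
  have mass := expTempered_gaussLaplace hμ continuous_one
  have deriv {ω : EuclideanSpace ℝ (Fin n) → ℝ} (hω : Continuous ω) :=
    expTempered_weightedSqMeanDeriv hμ hφ hω
  have evolution := hasDerivAt_integral_mul_heatK x (S := Ici 0) (Ici_mem_nhds (hθ₀.trans_lt hθ))
    hθ (expTempered_weightedSqMean hμ hφ)
    ((deriv (ω := fun z => ‖z‖ ^ 2) (by fun_prop)).const_mul (-1))
    (fun j => deriv (ω := fun z => z j) (by fun_prop))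
    (f₂ := fun j θ b => 2 * gaussLaplace μ 1 θ b * cov[fun z => z j, φ; gaussTilt μ θ b] ^ 2
        + weightedSqMeanDeriv μ φ (fun z => z j * z j) θ b)
    (fun j => ((mass.const_mul 2).mul ((expTempered_covariance hμ (by fun_prop) hφ).pow 2)).add
      (deriv (by fun_prop)))
    (fun σ _ b => by simpa only [neg_one_mul] using hasDerivAt_weightedSqMean hμ hφ σ b)
    (fun j b => by simpa only [coord] using hasLineDerivAt_weightedSqMean hμ hφ θ b (.single j 1))
    (fun j b => by
      simpa only [coord] using hasLineDerivAt_weightedSqMeanDeriv hμ hφ θ b (.single j 1))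
  convert! evolution using 1
  rw [dissipation, ← integral_const_mul]
  congr! 2
  -- The multipliers `z j * z j` add up to `‖z‖ ^ 2`, so only the covariance terms survive.
  rw [Finset.sum_add_distrib, sum_weightedSqMeanDeriv _ hμ hφ fun _ _ => by fun_prop,
    ← Finset.mul_sum]
  simp only [EuclideanSpace.norm_sq_eq, norm_eq_abs, sq_abs, ← sq]
  ring

end Dissipation

section MonotoneIntegral

variable {H g : ℝ → ℝ} {a b m M : ℝ}

theorem exists_monotone_eqOn_deriv (hd : ∀ t ∈ Ioo a b, HasDerivAt H (g t) t)
    (hg : ∀ t ∈ Ioo a b, 0 ≤ g t) (hH : ∀ t ∈ Ioo a b, H t ∈ Icc m M) (hm : m ≤ M) :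
    ∃ G : ℝ → ℝ, Monotone G ∧ (∀ t, G t ∈ Icc m M) ∧ EqOn (deriv G) g (Ioo a b) := by
  have H_mono : MonotoneOn H (Ioo a b) := monotoneOn_of_deriv_nonneg (convex_Ioo a b)
    (fun t ht => (hd t ht).continuousAt.continuousWithinAt)
    (fun t ht => (hd t (interior_subset ht)).differentiableAt.differentiableWithinAt)
    fun t ht => (hd t (interior_subset ht)).deriv ▸ hg t (interior_subset ht)
  have below : BddBelow (H '' Ioo a b) := ⟨m, forall_mem_image.2 fun t ht => (hH t ht).1⟩
  have above : BddAbove (H '' Ioo a b) := ⟨M, forall_mem_image.2 fun t ht => (hH t ht).2⟩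
  obtain ⟨F, F_mono, HF⟩ := H_mono.exists_monotone_extension below above
  refine ⟨fun t => projIcc m M hm (F t), fun s t hst => monotone_projIcc hm (F_mono hst),
    fun t => (projIcc m M hm (F t)).2, fun t ht => ?_⟩
  have eq_H : (fun t => (projIcc m M hm (F t) : ℝ)) =ᶠ[𝓝 t] H := by
    filter_upwards [isOpen_Ioo.mem_nhds ht] with s hs
    rw [← HF hs, projIcc_of_mem hm (hH s hs)]
  exact eq_H.deriv_eq.trans (hd t ht).deriv

theorem intervalIntegrable_and_integral_le_of_hasDerivAt (hab : a < b)
    (hd : ∀ t ∈ Ioo a b, HasDerivAt H (g t) t) (hg : ∀ t ∈ Ioo a b, 0 ≤ g t)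
    (hH : ∀ t ∈ Ioo a b, H t ∈ Icc m M) :
    IntervalIntegrable g volume a b ∧ ∫ t in a..b, g t ≤ M - m := by
  -- `g` is integrable because it agrees with the derivative of a bounded monotone function.
  obtain ⟨s, hs⟩ := nonempty_Ioo.2 hab
  obtain ⟨G, G_mono, hG, hGg⟩ :=
    exists_monotone_eqOn_deriv hd hg hH ((hH s hs).1.trans (hH s hs).2)
  have ae_eq : deriv G =ᵐ[volume.restrict (uIoc a b)] g := by
    rw [uIoc_of_le hab.le, ← restrict_Ioo_eq_restrict_Ioc]
    exact ae_restrict_of_forall_mem measurableSet_Ioo hGg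
  refine ⟨(G_mono.monotoneOn _).intervalIntegrable_deriv.congr_ae ae_eq, ?_⟩
  have le := (G_mono.monotoneOn (uIcc a b)).intervalIntegral_deriv_mem_uIcc
  rw [uIcc_of_le (sub_nonneg.2 (G_mono hab.le)), intervalIntegral.integral_congr_ae_restrict ae_eq]
    at le
  linarith [le.2, (hG b).2, (hG a).1]

end MonotoneIntegral

section IntegratedDissipation

variable {n : ℕ} {μ : Measure (EuclideanSpace ℝ (Fin n))} [IsFiniteMeasure μ] [NeZero μ]
  {φ : EuclideanSpace ℝ (Fin n) → ℝ} {R t₀ : ℝ}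

theorem integral_dissipation_le (hμ : ∀ᵐ z ∂μ, ‖z‖ ≤ R) (hφ : Continuous φ)
    (x : EuclideanSpace ℝ (Fin n)) (ht₀ : 0 < t₀) :
    IntervalIntegrable (fun t => (2 * t ^ 2)⁻¹ *
        dissipation μ φ x (4 * t)⁻¹ ((4 * t)⁻¹ - (4 * t₀)⁻¹)) volume 0 t₀ ∧
      ∫ t in 0..t₀, (2 * t ^ 2)⁻¹ * dissipation μ φ x (4 * t)⁻¹ ((4 * t)⁻¹ - (4 * t₀)⁻¹)
        ≤ gaussLaplace μ 1 (4 * t₀)⁻¹ x * Var[φ; gaussTilt μ (4 * t₀)⁻¹ x] := by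
  have hθ₀ : 0 ≤ (4 * t₀)⁻¹ := by positivity
  have lt {t : ℝ} (ht : t ∈ Ioo 0 t₀) : (4 * t₀)⁻¹ < (4 * t)⁻¹ := by
    have := ht.1
    gcongr
    exact ht.2
  have deriv_inv {t : ℝ} (ht : t ∈ Ioo 0 t₀) :
      HasDerivAt (fun t : ℝ => (4 * t)⁻¹) (-(4 * t ^ 2)⁻¹) t := by
    have := ht.1.ne'
    convert! ((hasDerivAt_id t).const_mul 4).inv (by simpa) using 1
    simp only [id_eq]
    field_simp
  rw [gaussLaplace_one_mul_variance hμ hφ, ← neg_sub_neg]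
  refine intervalIntegrable_and_integral_le_of_hasDerivAt ht₀
    (H := fun t => -∫ b, weightedSqMean μ φ (4 * t)⁻¹ b * heatK n x b ((4 * t)⁻¹ - (4 * t₀)⁻¹))
    (fun t ht => ?_) (fun t ht => ?_) (fun t ht => ⟨?_, ?_⟩)
  · convert! ((hasDerivAt_integral_weightedSqMean_mul_heatK hμ hφ x hθ₀ (lt ht)).comp t
      (deriv_inv ht)).neg using 1
    have := ht.1.ne'
    field_simp
    norm_num
  · exact mul_nonneg (by positivity) (dissipation_nonneg hμ x (sub_pos.2 (lt ht)))
  · exact neg_le_neg (integral_weightedSqMean_mul_heatK_le hμ hφ x hθ₀ (lt ht))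
  · exact neg_le_neg (weightedSqMean_le_integral_mul_heatK hμ hφ x hθ₀ (lt ht))

end IntegratedDissipation

section Hessian

variable {n : ℕ} {μ : Measure (EuclideanSpace ℝ (Fin n))} {R t : ℝ}

theorem pdv_eq_of_hasLineDerivAt {f : EuclideanSpace ℝ (Fin n) → ℝ} {f' : ℝ}
    {y : EuclideanSpace ℝ (Fin n)} {i : Fin n} (hf : DifferentiableAt ℝ f y)
    (h : HasLineDerivAt ℝ f f' y (EuclideanSpace.single i 1)) : pdv i f y = f' :=
  hf.lineDeriv_eq_fderiv.symm.trans h.lineDeriv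

theorem pdv_comp_smul (i : Fin n) (f : EuclideanSpace ℝ (Fin n) → ℝ) (c : ℝ)
    (y : EuclideanSpace ℝ (Fin n)) : pdv i (fun y => f (c • y)) y = c * pdv i f (c • y) := by
  simp only [pdv, fderiv_comp_smul, smul_apply, smul_eq_mul]

theorem heatK_eq_mul_exp (y z : EuclideanSpace ℝ (Fin n)) (ht : t ≠ 0) :
    heatK n y z t = heatK n y 0 t * exp (⟪(2 * t)⁻¹ • y, z⟫_ℝ - (4 * t)⁻¹ * ‖z‖ ^ 2) := by
  rw [heatK, heatK, mul_assoc _ (exp _), ← exp_add, sub_zero, norm_sub_sq_real,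
    real_inner_smul_left]
  congr 2
  field_simp
  ring

theorem integral_heatK_eq_mul_gaussLaplace (y : EuclideanSpace ℝ (Fin n)) (ht : t ≠ 0) :
    ∫ z, heatK n y z t ∂μ = heatK n y 0 t * gaussLaplace μ 1 (4 * t)⁻¹ ((2 * t)⁻¹ • y) := by
  simp_rw [gaussLaplace, ← integral_const_mul, Pi.one_apply, one_mul]
  exact integral_congr_ae (.of_forall fun z => heatK_eq_mul_exp y z ht)

variable [IsFiniteMeasure μ] [NeZero μ]

theorem differentiable_integral_gaussTilt {φ : EuclideanSpace ℝ (Fin n) → ℝ}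
    (hμ : ∀ᵐ z ∂μ, ‖z‖ ≤ R) (hφ : Continuous φ) (θ : ℝ) :
    Differentiable ℝ (fun b => ∫ z, φ z ∂gaussTilt μ θ b) := fun b => by
  simp only [integral_gaussTilt, div_eq_mul_inv]
  exact (hasFDerivAt_gaussLaplace hμ hφ θ b).differentiableAt.fun_mul
    ((hasFDerivAt_gaussLaplace hμ continuous_one θ b).differentiableAt.fun_inv
      (gaussLaplace_one_pos hμ θ b).ne')

theorem pdv_log_gaussLaplace_one (hμ : ∀ᵐ z ∂μ, ‖z‖ ≤ R) (θ : ℝ) (j : Fin n)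
    (b : EuclideanSpace ℝ (Fin n)) :
    pdv j (fun b => log (gaussLaplace μ 1 θ b)) b = ∫ z, z j ∂gaussTilt μ θ b := by
  have pos := gaussLaplace_one_pos hμ θ
  refine pdv_eq_of_hasLineDerivAt
    ((hasFDerivAt_gaussLaplace hμ continuous_one θ b).differentiableAt.log (pos b).ne') ?_
  have := hasLineDerivAt_gaussLaplace hμ continuous_one θ b (EuclideanSpace.single j 1)
  rw [HasLineDerivAt] at this ⊢
  convert! this.log (pos _).ne' using 1
  simp [integral_gaussTilt, EuclideanSpace.inner_single_left]

theorem pdv_integral_gaussTilt (hμ : ∀ᵐ z ∂μ, ‖z‖ ≤ R) (θ : ℝ) (i j : Fin n)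
    (b : EuclideanSpace ℝ (Fin n)) :
    pdv i (fun b => ∫ z, z j ∂gaussTilt μ θ b) b
      = cov[fun z => z i, fun z => z j; gaussTilt μ θ b] := by
  refine pdv_eq_of_hasLineDerivAt (differentiable_integral_gaussTilt hμ (by fun_prop) θ b) ?_
  simpa [EuclideanSpace.inner_single_left] using
    hasLineDerivAt_integral_gaussTilt hμ (φ := fun z => z j) (by fun_prop) θ b
      (EuclideanSpace.single i 1)

theorem hasFDerivAt_log_heatK_zero (ht : 0 < t) (y : EuclideanSpace ℝ (Fin n)) :
    HasFDerivAt (fun y => log (heatK n y 0 t)) (-(2 * t)⁻¹ • innerSL ℝ y) y := by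
  have log_eq (y : EuclideanSpace ℝ (Fin n)) : log (heatK n y 0 t)
      = log ((4 * π * t) ^ (-(n : ℝ) / 2)) + -(4 * t)⁻¹ * ‖y‖ ^ 2 := by
    rw [heatK, log_mul (by positivity) (exp_pos _).ne', log_exp, sub_zero, neg_mul,
      ← div_eq_inv_mul, neg_div (4 * t)]
  simp only [log_eq]
  convert! ((hasFDerivAt_id y).norm_sq.const_mul (-(4 * t)⁻¹)).const_add _ using 1
  ext v
  simp only [smul_apply, coe_innerSL_apply, smul_eq_mul, id_eq, ContinuousLinearMap.comp_id,
    nsmul_eq_mul, Nat.cast_ofNat]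
  field_simp
  ring

theorem pdv_log_integral_heatK (hμ : ∀ᵐ z ∂μ, ‖z‖ ≤ R) (ht : 0 < t) (j : Fin n)
    (y : EuclideanSpace ℝ (Fin n)) :
    pdv j (fun y => log (∫ z, heatK n y z t ∂μ)) y
      = (2 * t)⁻¹ * ((∫ z, z j ∂gaussTilt μ (4 * t)⁻¹ ((2 * t)⁻¹ • y)) - y j) := by
  have pos := gaussLaplace_one_pos hμ (4 * t)⁻¹
  have log_eq (y : EuclideanSpace ℝ (Fin n)) : log (∫ z, heatK n y z t ∂μ)
      = log (heatK n y 0 t) + log (gaussLaplace μ 1 (4 * t)⁻¹ ((2 * t)⁻¹ • y)) := by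
    rw [integral_heatK_eq_mul_gaussLaplace y ht.ne', log_mul (heatK_pos ht).ne' (pos _).ne']
  have kernel := hasFDerivAt_log_heatK_zero ht y
  have laplace : DifferentiableAt ℝ (fun y => log (gaussLaplace μ 1 (4 * t)⁻¹ ((2 * t)⁻¹ • y))) y :=
    ((hasFDerivAt_gaussLaplace hμ continuous_one _ _).differentiableAt.comp y
      (differentiableAt_id.const_smul (2 * t)⁻¹)).log (pos _).ne'
  have pdv_laplace := pdv_comp_smul j (fun b => log (gaussLaplace μ 1 (4 * t)⁻¹ b)) (2 * t)⁻¹ y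
  rw [pdv_log_gaussLaplace_one hμ, pdv] at pdv_laplace
  simp only [log_eq]
  rw [pdv, fderiv_fun_add kernel.differentiableAt laplace, add_apply, pdv_laplace, kernel.fderiv]
  simp only [smul_apply, coe_innerSL_apply, EuclideanSpace.inner_single_right, ringHom_apply,
    one_mul, smul_eq_mul]
  ring

theorem hess_log_integral_heatK (hμ : ∀ᵐ z ∂μ, ‖z‖ ≤ R) (ht : 0 < t) (i j : Fin n)
    (y : EuclideanSpace ℝ (Fin n)) :
    hess i j (fun y => log (∫ z, heatK n y z t ∂μ)) y + 1 / (2 * t) * (if i = j then 1 else 0)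
      = (2 * t)⁻¹ ^ 2 *
        cov[fun z => z i, fun z => z j; gaussTilt μ (4 * t)⁻¹ ((2 * t)⁻¹ • y)] := by
  have mean_diff := differentiable_integral_gaussTilt hμ (φ := fun z => z j) (by fun_prop) (4 * t)⁻¹
  have mean : DifferentiableAt ℝ
      (fun y => ∫ z, z j ∂gaussTilt μ (4 * t)⁻¹ ((2 * t)⁻¹ • y)) y :=
    (mean_diff _).comp y (differentiableAt_id.const_smul (2 * t)⁻¹)
  have coord : HasFDerivAt (fun y : EuclideanSpace ℝ (Fin n) => y j)
      (EuclideanSpace.proj (𝕜 := ℝ) j) y := PiLp.hasFDerivAt_apply 2 y j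
  have pdv_mean := pdv_comp_smul i (fun b => ∫ z, z j ∂gaussTilt μ (4 * t)⁻¹ b) (2 * t)⁻¹ y
  rw [pdv_integral_gaussTilt hμ, pdv] at pdv_mean
  rw [hess, funext (pdv_log_integral_heatK hμ ht j), pdv,
    fderiv_const_mul (mean.fun_sub coord.differentiableAt),
    fderiv_fun_sub mean coord.differentiableAt, smul_apply, sub_apply, pdv_mean, coord.fderiv]
  simp only [PiLp.proj_apply, PiLp.single_apply, smul_eq_mul, one_div, eq_comm (a := i)]
  ring

end Hessian

theorem withDensity_ofReal_ne_zero {X : Type*} [TopologicalSpace X] [MeasurableSpace X]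
    [OpensMeasurableSpace X] {μ : Measure X} [μ.IsOpenPosMeasure] {f : X → ℝ}
    (hf : Continuous f) (hf0 : ∀ x, 0 ≤ f x) (hne : ∃ x, f x ≠ 0) :
    μ.withDensity (fun x => ENNReal.ofReal (f x)) ≠ 0 := by
  obtain ⟨x, hx⟩ := hne
  rw [Ne, withDensity_eq_zero_iff (by fun_prop)]
  intro h
  have ae_zero : f =ᵐ[μ] 0 := by
    filter_upwards [h] with y hy
    exact (ENNReal.ofReal_eq_zero.1 hy).antisymm (hf0 y)
  exact hx (congr_fun (hf.ae_eq_iff_eq μ continuous_zero |>.1 ae_zero) x)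

theorem exists_ae_withDensity_norm_le {E : Type*} [NormedAddCommGroup E] [MeasurableSpace E]
    [BorelSpace E] {μ : Measure E} {f : E → ℝ}
    (hf : Continuous f) (hsupp : HasCompactSupport f) :
    ∃ R, ∀ᵐ x ∂μ.withDensity (fun x => ENNReal.ofReal (f x)), ‖x‖ ≤ R := by
  obtain ⟨R, hR⟩ := hsupp.isBounded.exists_norm_le
  refine ⟨R, (ae_withDensity_iff (by fun_prop)).2 (ae_of_all _ fun x hx => hR x ?_)⟩
  refine subset_tsupport f fun h => hx ?_
  rw [h, ENNReal.ofReal_zero]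

theorem integral_withDensity_ofReal {X : Type*} [MeasurableSpace X] {μ : Measure X} {f g : X → ℝ}
    (hf : Measurable f) (hf0 : ∀ x, 0 ≤ f x) :
    ∫ x, g x ∂μ.withDensity (fun x => ENNReal.ofReal (f x)) = ∫ x, g x * f x ∂μ := by
  rw [integral_withDensity_eq_integral_toReal_smul (by fun_prop) (by simp)]
  simp only [ENNReal.toReal_ofReal (hf0 _), smul_eq_mul, mul_comm]

section LiYau

variable {n : ℕ} {t t₀ : ℝ}

theorem heatK_normalization_mul (ht : 0 < t) (htt₀ : t < t₀) :
    (4 * π * t) ^ (-(n : ℝ) / 2) * (4 * π * (t₀ - t)) ^ (-(n : ℝ) / 2) * (2 * t) ^ n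
      = (4 * π * t₀) ^ (-(n : ℝ) / 2)
        * (4 * π * ((4 * t)⁻¹ - (4 * t₀)⁻¹)) ^ (-(n : ℝ) / 2) := by
  have pos : 0 < t₀ - t := sub_pos.2 htt₀
  have ht₀ : 0 < t₀ := ht.trans htt₀
  have sub_eq : (4 * t)⁻¹ - (4 * t₀)⁻¹ = (t₀ - t) / (4 * t * t₀) := by field_simp
  have pow_eq : (2 * t) ^ n = ((4 * t ^ 2)⁻¹) ^ (-(n : ℝ) / 2) := by
    rw [neg_div, rpow_neg (by positivity), inv_rpow (by positivity), inv_inv,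
      show 4 * t ^ 2 = (2 * t) ^ (2 : ℝ) by norm_cast; ring, ← rpow_mul (by positivity),
      mul_div_cancel₀ _ two_ne_zero, rpow_natCast]
  rw [pow_eq, sub_eq, ← mul_rpow (by positivity) (by positivity),
    ← mul_rpow (by positivity) (by positivity), ← mul_rpow (by positivity) (by positivity)]
  congr 1
  field_simp

theorem heatK_zero_mul_heatK (x y : EuclideanSpace ℝ (Fin n)) (ht : 0 < t) (htt₀ : t < t₀) :
    heatK n y 0 t * heatK n x y (t₀ - t) * (2 * t) ^ n = heatK n x 0 t₀ *
      heatK n ((2 * t₀)⁻¹ • x) ((2 * t)⁻¹ • y) ((4 * t)⁻¹ - (4 * t₀)⁻¹) := by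
  have pos : 0 < t₀ - t := sub_pos.2 htt₀
  have ht₀ : 0 < t₀ := ht.trans htt₀
  have exponent : -‖y - 0‖ ^ 2 / (4 * t) + -‖x - y‖ ^ 2 / (4 * (t₀ - t))
      = -‖x - 0‖ ^ 2 / (4 * t₀)
        + -‖(2 * t₀)⁻¹ • x - (2 * t)⁻¹ • y‖ ^ 2 / (4 * ((4 * t)⁻¹ - (4 * t₀)⁻¹)) := by
    rw [show (4 * t)⁻¹ - (4 * t₀)⁻¹ = (t₀ - t) / (4 * t * t₀) by field_simp, sub_zero, sub_zero,
      norm_sub_sq_real, norm_sub_sq_real, inner_smul_left, inner_smul_right, norm_smul, norm_smul,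
      mul_pow, mul_pow, norm_eq_abs, norm_eq_abs, sq_abs, sq_abs, conj_trivial]
    field_simp
    ring
  simp only [heatK]
  calc _ = (4 * π * t) ^ (-(n : ℝ) / 2) * (4 * π * (t₀ - t)) ^ (-(n : ℝ) / 2) * (2 * t) ^ n
        * exp (-‖y - 0‖ ^ 2 / (4 * t) + -‖x - y‖ ^ 2 / (4 * (t₀ - t))) := by rw [exp_add]; ring
    _ = _ := by rw [heatK_normalization_mul ht htt₀, exponent, exp_add]; ring

variable {μ : Measure (EuclideanSpace ℝ (Fin n))} [IsFiniteMeasure μ] [NeZero μ] {R : ℝ}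

theorem sum_hess_log_sq_mul_heatK (hμ : ∀ᵐ z ∂μ, ‖z‖ ≤ R) (x y : EuclideanSpace ℝ (Fin n))
    (ht : 0 < t) (htt₀ : t < t₀) :
    (∑ i, ∑ j, (hess i j (fun y => log (∫ z, heatK n y z t ∂μ)) y
        + (1 / (2 * t)) * (if i = j then 1 else 0)) ^ 2)
        * (∫ z, heatK n y z t ∂μ) * heatK n x y (t₀ - t)
      = heatK n x 0 t₀ * (2 * t)⁻¹ ^ 4 * ((2 * t) ^ n)⁻¹ *
        (gaussLaplace μ 1 (4 * t)⁻¹ ((2 * t)⁻¹ • y) * (∑ i, ∑ j,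
          cov[fun z => z j, fun z => z i; gaussTilt μ (4 * t)⁻¹ ((2 * t)⁻¹ • y)] ^ 2) *
          heatK n ((2 * t₀)⁻¹ • x) ((2 * t)⁻¹ • y) ((4 * t)⁻¹ - (4 * t₀)⁻¹)) := by
  have kernels : heatK n y 0 t * heatK n x y (t₀ - t) = heatK n x 0 t₀ *
      heatK n ((2 * t₀)⁻¹ • x) ((2 * t)⁻¹ • y) ((4 * t)⁻¹ - (4 * t₀)⁻¹) * ((2 * t) ^ n)⁻¹ := by
    rw [← heatK_zero_mul_heatK x y ht htt₀, mul_inv_cancel_right₀ (by positivity)]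
  set b := (2 * t)⁻¹ • y
  calc _ = (2 * t)⁻¹ ^ 4 * (∑ i, ∑ j, cov[fun z => z i, fun z => z j; gaussTilt μ (4 * t)⁻¹ b] ^ 2)
        * gaussLaplace μ 1 (4 * t)⁻¹ b * (heatK n y 0 t * heatK n x y (t₀ - t)) := by
        simp only [hess_log_integral_heatK hμ ht, mul_pow _ (cov[_, _; _]), ← Finset.mul_sum,
          integral_heatK_eq_mul_gaussLaplace y ht.ne', b]
        ring
    _ = _ := by rw [kernels, Finset.sum_comm]; ring

theorem integral_hess_log_sq_mul_heatK (hμ : ∀ᵐ z ∂μ, ‖z‖ ≤ R) (x : EuclideanSpace ℝ (Fin n))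
    (ht : 0 < t) (htt₀ : t < t₀) :
    t ^ 2 * ∫ y, (∑ i, ∑ j, (hess i j (fun y => log (∫ z, heatK n y z t ∂μ)) y
        + (1 / (2 * t)) * (if i = j then 1 else 0)) ^ 2)
        * (∫ z, heatK n y z t ∂μ) * heatK n x y (t₀ - t)
      = heatK n x 0 t₀ / 8 * ∑ i, (2 * t ^ 2)⁻¹ * dissipation μ (fun z => z i)
        ((2 * t₀)⁻¹ • x) (4 * t)⁻¹ ((4 * t)⁻¹ - (4 * t₀)⁻¹) := by
  have pos : 0 < (4 * t)⁻¹ - (4 * t₀)⁻¹ := by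
    rw [sub_pos]
    gcongr
  simp only [sum_hess_log_sq_mul_heatK hμ x _ ht htt₀, integral_const_mul]
  rw [Measure.integral_comp_inv_smul_of_nonneg volume (fun b => gaussLaplace μ 1 (4 * t)⁻¹ b *
      (∑ i, ∑ j, cov[fun z => z j, fun z => z i; gaussTilt μ (4 * t)⁻¹ b] ^ 2) *
      heatK n ((2 * t₀)⁻¹ • x) b ((4 * t)⁻¹ - (4 * t₀)⁻¹)) (by positivity),
    ← sum_dissipation _ hμ (fun i _ => by fun_prop) _ (by positivity) pos,
    finrank_euclideanSpace_fin, ← Finset.mul_sum, smul_eq_mul]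
  generalize ∑ i, dissipation μ (fun z => z i) _ _ _ = D
  field_simp
  ring

theorem mul_lap_log_integral_heatK_add (hμ : ∀ᵐ z ∂μ, ‖z‖ ≤ R) (x : EuclideanSpace ℝ (Fin n))
    (ht : 0 < t) :
    (∫ z, heatK n x z t ∂μ) * lap (fun y => log (∫ z, heatK n y z t ∂μ)) x
        + n / (2 * t) * ∫ z, heatK n x z t ∂μ
      = heatK n x 0 t * (2 * t)⁻¹ ^ 2 * ∑ i, gaussLaplace μ 1 (4 * t)⁻¹ ((2 * t)⁻¹ • x) *
        Var[fun z => z i; gaussTilt μ (4 * t)⁻¹ ((2 * t)⁻¹ • x)] := by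
  have laplacian : lap (fun y => log (∫ z, heatK n y z t ∂μ)) x + n / (2 * t) = ∑ i,
      (2 * t)⁻¹ ^ 2 * Var[fun z => z i; gaussTilt μ (4 * t)⁻¹ ((2 * t)⁻¹ • x)] := by
    have covariance_self (i : Fin n) := ProbabilityTheory.covariance_self (X := fun z => z i)
      (μ := gaussTilt μ (4 * t)⁻¹ ((2 * t)⁻¹ • x)) (by fun_prop)
    simp only [← covariance_self, ← hess_log_integral_heatK hμ ht, Finset.sum_add_distrib, lap]
    simp [div_eq_mul_inv]
  rw [mul_comm (n / (2 * t)), ← mul_add, laplacian, integral_heatK_eq_mul_gaussLaplace x ht.ne',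
    ← Finset.mul_sum, ← Finset.mul_sum]
  ring

theorem stmt9_general (hμ : ∀ᵐ z ∂μ, ‖z‖ ≤ R) (u : EuclideanSpace ℝ (Fin n) → ℝ → ℝ)
    (hu : ∀ y t, u y t = ∫ z, heatK n y z t ∂μ) (x₀ : EuclideanSpace ℝ (Fin n)) (ht₀ : 0 < t₀)
    (hatH : EuclideanSpace ℝ (Fin n) → ℝ → ℝ) (hhatH : ∀ y t, hatH y t = heatK n x₀ y (t₀ - t)) :
    ((2 / t₀ ^ 2) * ∫ t in (0 : ℝ)..t₀, t ^ 2 * ∫ y,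
        (∑ i, ∑ j, (hess i j (fun z => log (u z t)) y
            + (1 / (2 * t)) * (if i = j then 1 else 0)) ^ 2)
          * u y t * hatH y t)
      ≤ u x₀ t₀ * lap (fun z => log (u z t₀)) x₀ + (n / (2 * t₀)) * u x₀ t₀
    ∧ 0 ≤ u x₀ t₀ * lap (fun z => log (u z t₀)) x₀ + (n / (2 * t₀)) * u x₀ t₀ := by
  simp only [hu, hhatH]
  rw [mul_lap_log_integral_heatK_add hμ x₀ ht₀]
  set x := (2 * t₀)⁻¹ • x₀
  have bound (i : Fin n) := integral_dissipation_le hμ (φ := fun z => z i) (by fun_prop) x ht₀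
  have kernel_pos : 0 < heatK n x₀ 0 t₀ := heatK_pos ht₀
  refine ⟨?_, mul_nonneg (by positivity) (Finset.sum_nonneg fun i _ => ?_)⟩
  · rw [intervalIntegral.integral_congr_Ioo_of_le ht₀.le fun t ht =>
        integral_hess_log_sq_mul_heatK hμ x₀ ht.1 ht.2,
      intervalIntegral.integral_const_mul,
      intervalIntegral.integral_finsetSum fun i _ => (bound i).1]
    calc _ = heatK n x₀ 0 t₀ * (2 * t₀)⁻¹ ^ 2 * ∑ i, ∫ t in 0..t₀, (2 * t ^ 2)⁻¹ *
          dissipation μ (fun z => z i) x (4 * t)⁻¹ ((4 * t)⁻¹ - (4 * t₀)⁻¹) := by ring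
      _ ≤ _ := by
        gcongr with i
        exact (bound i).2
  · exact mul_nonneg (gaussLaplace_one_pos hμ _ _).le (ProbabilityTheory.variance_nonneg _ _)

end LiYau

/-- Flat-space inequality (20) of Proposition 7 of the paper:
`u(Δ log u + n/(2t₀)) (x₀,t₀) ≥ (2/t₀²) ∫₀^{t₀} t² ∫ ‖∇² log u + I/(2t)‖²_F u Ĥ dy dt ≥ 0`. -/
theorem stmt9 (n : ℕ) (hn : 1 ≤ n)
    (u₀ : EuclideanSpace ℝ (Fin n) → ℝ) (hc : Continuous u₀)
    (hsupp : HasCompactSupport u₀) (hnn : ∀ z, 0 ≤ u₀ z) (hne : ∃ z, u₀ z ≠ 0)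
    (u : EuclideanSpace ℝ (Fin n) → ℝ → ℝ)
    (hu : ∀ y t, u y t = ∫ z, heatK n y z t * u₀ z)
    (x₀ : EuclideanSpace ℝ (Fin n)) (t₀ : ℝ) (ht₀ : 0 < t₀)
    (hatH : EuclideanSpace ℝ (Fin n) → ℝ → ℝ)
    (hhatH : ∀ y t, hatH y t
      = (4 * π * (t₀ - t)) ^ (-(n : ℝ) / 2)
          * Real.exp (-‖x₀ - y‖ ^ 2 / (4 * (t₀ - t)))) :
    ((2 / t₀ ^ 2) * ∫ t in (0 : ℝ)..t₀, t ^ 2 * ∫ y,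
        (∑ i, ∑ j, (hess i j (fun z => Real.log (u z t)) y
            + (1 / (2 * t)) * (if i = j then 1 else 0)) ^ 2)
          * u y t * hatH y t)
      ≤ u x₀ t₀ * lap (fun z => Real.log (u z t₀)) x₀ + (n / (2 * t₀)) * u x₀ t₀
    ∧ 0 ≤ u x₀ t₀ * lap (fun z => Real.log (u z t₀)) x₀
          + (n / (2 * t₀)) * u x₀ t₀ := by
  have := isFiniteMeasure_withDensity_ofReal (μ := volume)
    (hc.integrable_of_hasCompactSupport hsupp).2
  have : NeZero _ := ⟨withDensity_ofReal_ne_zero (μ := volume) hc hnn hne⟩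
  obtain ⟨R, hR⟩ := exists_ae_withDensity_norm_le (μ := volume) hc hsupp
  exact stmt9_general hR u (fun y t => by rw [hu, integral_withDensity_ofReal hc.measurable hnn])
    x₀ ht₀ hatH hhatH
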